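/- Let Λ be a finite-dimensional basic algebra and M := mod Λ. The association X ↦ [Cogen X, (τ⁻¹X)^⊥] is a bijection from the set of isomorphism classes of cogen-minimal basic τ⁻¹-rigid modules in M to the set of functorially finite maximal join intervals in torf M, with inverse given by I ↦ I_s(I⁻). -/

import Mathlib

/-!
Fix a finitely generated module `X` and a minimal injective copresentation `0 → X → I0 → I1`.
Because `I1` is an injective hull of the image of `I0`, a module `M` lies in `(τ⁻¹X)^⊥` if and only
if every map `M → I1` lifts along `p : I0 → I1` (`Copres.mem_perp_iff`). This criterion shows that
`(τ⁻¹X)^⊥` is a torsion-free class and, through a universal pullback, that it is covariantly finite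
(`perp_torf`, `perp_covFin`). When `X` is `τ⁻¹`-rigid, the same holds for `Cogen X` (`cogen_torf`,
`cogen_covFin`); contravariant finiteness is automatic for torsion-free classes
(`torf_contraFin`).

A basic cogen-minimal `X` is split injective in `Cogen X`: otherwise the endomorphisms of `X`
factoring through a non-split embedding `X → Y` with `Y ∈ Cogen X` form, up to an idempotent, a
nilpotent left ideal, and a proper direct summand of `X` would already cogenerate `X`
(`proper_cogen`, `splitInj_of_minimal`). Hence `X` is the basic additive generator of the split
injective objects of `Cogen X`, and such a generator is unique up to isomorphism
(`isMinSplitInj`, `iso_of_minSplitInj`). This gives injectivity and the formula for the inverse.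

The interval is a maximal join interval because `(τ⁻¹X)^⊥` is the join of `Cogen X` and its covers
(`perp_eq_pop`). On the one hand, a cover not contained in `(τ⁻¹X)^⊥` contains a torsion object `E`
with a non-split extension by `X`; the middle term of this extension lies in the cover and receives
a nonzero map from `E`, which splits the extension (`cover_subset_perp`). On the other hand, a
minimal object of `(τ⁻¹X)^⊥` outside a torsion-free class `H ⊇ Cogen X` generates a cover of
`Cogen X` together with `Cogen X`, so `H` does not contain all covers (`perp_subset_of_covers`).

Finally, a functorially finite torsion-free class is cogenerated by an approximation of an injective
cogenerator, and a cogenerator `X` of minimal length is basic, cogen-minimal and split injective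
(`exists_min_generator`). Split injectivity forces `τ⁻¹`-rigidity (`rigid_of_splitInj`), and the
upper endpoint of the interval is then determined by `perp_eq_pop`; this is surjectivity.
-/

/- Framework: the category `mod Λ` of finitely generated modules over a
finite-dimensional algebra `Λ`, modeled concretely via `ModuleCat Λ` together
with the finiteness predicate `Module.Finite`.  Subcategories are sets of
(bundled) modules.  `τ⁻¹`-rigidity and `(τ⁻¹X)^⊥` are encoded via the
Auslander–Smalø characterizations
`Hom(τ⁻¹X, M) = 0 ↔ Ext¹(M', X) = 0 for all M' ∈ Cogen M`. -/

open Function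

noncomputable section

namespace Paper

variable (Λ : Type) [Ring Λ]

abbrev Mdl := ModuleCat.{0} Λ

/-- The class of all finitely generated `Λ`-modules, i.e. `mod Λ` itself. -/
def modAll : Set (Mdl Λ) := {M | Module.Finite Λ ↥M}

/-- Isomorphism of modules. -/
def IsoM (M N : Mdl Λ) : Prop := Nonempty (↥M ≃ₗ[Λ] ↥N)

/-- Direct sum of two modules. -/
def dsum (M N : Mdl Λ) : Mdl Λ := ModuleCat.of Λ (↥M × ↥N)

/-- `M` is a direct summand of `N`. -/
def IsSummand (M N : Mdl Λ) : Prop :=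
  ∃ (i : ↥M →ₗ[Λ] ↥N) (p : ↥N →ₗ[Λ] ↥M), p.comp i = LinearMap.id

/-- The additive closure `add X`: direct summands of finite direct sums of copies of `X`. -/
def addOf (X : Mdl Λ) : Set (Mdl Λ) :=
  {M | ∃ n : ℕ, IsSummand Λ M (ModuleCat.of Λ (Fin n → ↥X))}

/-- `M` is a zero object. -/
def IsZeroM (M : Mdl Λ) : Prop := Subsingleton ↥M

/-- `M` is indecomposable (and nonzero). -/
def Indec (M : Mdl Λ) : Prop :=
  ¬ IsZeroM Λ M ∧ ∀ A B : Mdl Λ, IsoM Λ M (dsum Λ A B) → IsZeroM Λ A ∨ IsZeroM Λ B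

/-- `X` is basic: no nonzero module `N` with `N ⊕ N` a direct summand of `X`. -/
def IsBasic (X : Mdl Λ) : Prop :=
  ∀ N : Mdl Λ, ¬ IsZeroM Λ N → ¬ IsSummand Λ (dsum Λ N N) X

/-- `W` is (up to isomorphism) the module `Z/D` obtained from `Z` by deleting all
direct summands lying in `D`. -/
def IsDeleted (Z : Mdl Λ) (D : Set (Mdl Λ)) (W : Mdl Λ) : Prop :=
  ∃ Z' : Mdl Λ, IsoM Λ Z (dsum Λ W Z') ∧
    (∀ V, Indec Λ V → IsSummand Λ V Z' → V ∈ D) ∧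
    (∀ V, Indec Λ V → IsSummand Λ V W → V ∉ D)

/-- `Cogen 𝒞` for a class of modules `𝒞`. -/
def CogenS (C : Set (Mdl Λ)) : Set (Mdl Λ) :=
  {M | Module.Finite Λ ↥M ∧ ∃ Y ∈ C, ∃ f : ↥M →ₗ[Λ] ↥Y, Injective f}

/-- `Cogen X` for a module `X`. -/
def Cogen (X : Mdl Λ) : Set (Mdl Λ) := CogenS Λ (addOf Λ X)

/-- `𝒞^⊥ = {M | Hom(𝒞, M) = 0}`. -/
def perpR (C : Set (Mdl Λ)) : Set (Mdl Λ) :=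
  {M | Module.Finite Λ ↥M ∧ ∀ X ∈ C, ∀ f : ↥X →ₗ[Λ] ↥M, f = 0}

/-- `⊥𝒞 = {M | Hom(M, 𝒞) = 0}`. -/
def perpL (C : Set (Mdl Λ)) : Set (Mdl Λ) :=
  {M | Module.Finite Λ ↥M ∧ ∀ X ∈ C, ∀ f : ↥M →ₗ[Λ] ↥X, f = 0}

/-- `0 → A → E → B → 0` is a short exact sequence. -/
def IsSESeq {A E B : Mdl Λ} (f : ↥A →ₗ[Λ] ↥E) (g : ↥E →ₗ[Λ] ↥B) : Prop :=
  Injective f ∧ Surjective g ∧ LinearMap.range f = LinearMap.ker g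

/-- `Ext¹(A, B) = 0`: every short exact sequence `0 → B → E → A → 0` splits. -/
def Ext1Zero (A B : Mdl Λ) : Prop :=
  ∀ (E : Mdl Λ) (f : ↥B →ₗ[Λ] ↥E) (g : ↥E →ₗ[Λ] ↥A),
    IsSESeq Λ f g → ∃ s : ↥A →ₗ[Λ] ↥E, g.comp s = LinearMap.id

/-- `X` is `τ⁻¹`-rigid, i.e. `Hom(τ⁻¹X, X) = 0`; encoded via the Auslander–Smalø
characterization: `Ext¹(Y, X) = 0` for every `Y ∈ Cogen X`. -/
def TauInvRigid (X : Mdl Λ) : Prop :=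
  Module.Finite Λ ↥X ∧ ∀ Y ∈ Cogen Λ X, Ext1Zero Λ Y X

/-- The torsion-free class `(τ⁻¹X)^⊥`; encoded via Auslander–Smalø:
`Hom(τ⁻¹X, M) = 0` iff `Ext¹(N, X) = 0` for all `N ∈ Cogen M`. -/
def perpTauInv (X : Mdl Λ) : Set (Mdl Λ) :=
  {M | Module.Finite Λ ↥M ∧ ∀ N ∈ Cogen Λ M, Ext1Zero Λ N X}

/-- The zero subcategory `0`. -/
def zeroSubcat : Set (Mdl Λ) := {M | IsZeroM Λ M}

/-- `C` is a torsion-free class of the abelian (wide, extension-closed)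
subcategory `W`: contained in `W`, contains `0`, closed under extensions (taken
in `W`) and under submodules lying in `W`. -/
def IsTorfIn (W C : Set (Mdl Λ)) : Prop :=
  C ⊆ W ∧ (∃ Z ∈ C, IsZeroM Λ Z) ∧
  (∀ (A E B : Mdl Λ) (f : ↥A →ₗ[Λ] ↥E) (g : ↥E →ₗ[Λ] ↥B),
      IsSESeq Λ f g → A ∈ C → B ∈ C → E ∈ W → E ∈ C) ∧
  (∀ M N : Mdl Λ, M ∈ W → N ∈ C → (∃ f : ↥M →ₗ[Λ] ↥N, Injective f) → M ∈ C)

/-- `C` is a torsion-free class of `mod Λ`. -/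
def IsTorf (C : Set (Mdl Λ)) : Prop := IsTorfIn Λ (modAll Λ) C

/-- `C` is a torsion class of the abelian (wide) subcategory `W`. -/
def IsTorsIn (W C : Set (Mdl Λ)) : Prop :=
  C ⊆ W ∧ (∃ Z ∈ C, IsZeroM Λ Z) ∧
  (∀ (A E B : Mdl Λ) (f : ↥A →ₗ[Λ] ↥E) (g : ↥E →ₗ[Λ] ↥B),
      IsSESeq Λ f g → A ∈ C → B ∈ C → E ∈ W → E ∈ C) ∧
  (∀ M N : Mdl Λ, M ∈ C → N ∈ W → (∃ g : ↥M →ₗ[Λ] ↥N, Surjective g) → N ∈ C)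

/-- Contravariant finiteness of `C` in `B`: every object of `B` admits a left
`C`-approximation. -/
def ContraFinIn (C B : Set (Mdl Λ)) : Prop :=
  ∀ X ∈ B, ∃ X' ∈ C, ∃ h : ↥X →ₗ[Λ] ↥X',
    ∀ C' ∈ C, ∀ f : ↥X →ₗ[Λ] ↥C', ∃ g : ↥X' →ₗ[Λ] ↥C', g.comp h = f

/-- Covariant finiteness of `C` in `B`: every object of `B` admits a right
`C`-approximation. -/
def CovFinIn (C B : Set (Mdl Λ)) : Prop :=
  ∀ X ∈ B, ∃ X' ∈ C, ∃ h : ↥X' →ₗ[Λ] ↥X,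
    ∀ C' ∈ C, ∀ f : ↥C' →ₗ[Λ] ↥X, ∃ g : ↥C' →ₗ[Λ] ↥X', h.comp g = f

def FunctFinIn (C B : Set (Mdl Λ)) : Prop := ContraFinIn Λ C B ∧ CovFinIn Λ C B

def ContraFin (C : Set (Mdl Λ)) : Prop := ContraFinIn Λ C (modAll Λ)
def CovFin (C : Set (Mdl Λ)) : Prop := CovFinIn Λ C (modAll Λ)
def FunctFin (C : Set (Mdl Λ)) : Prop := ContraFin Λ C ∧ CovFin Λ C

/-- `F'` covers `F` in the lattice of torsion-free classes of `W`. -/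
def CoversIn (W F' F : Set (Mdl Λ)) : Prop :=
  IsTorfIn Λ W F ∧ IsTorfIn Λ W F' ∧ F ⊂ F' ∧
    ∀ G, IsTorfIn Λ W G → F ⊂ G → G ⊆ F' → G = F'

/-- `pop^G(F)` computed in `torf W`: the join of `F` together with all covers of
`F` contained in `G`, realized as the intersection of all torsion-free classes
of `W` containing them. -/
def popIn (W G F : Set (Mdl Λ)) : Set (Mdl Λ) :=
  ⋂₀ {H | IsTorfIn Λ W H ∧ F ⊆ H ∧ ∀ F', CoversIn Λ W F' F → F' ⊆ G → F' ⊆ H}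

/-- `[Jlo, Jhi]` is a maximal join interval in the interval `[Ilo, Ihi]` of the
lattice of torsion-free classes of `W`. -/
def IsMaxJoinIn (W Jlo Jhi Ilo Ihi : Set (Mdl Λ)) : Prop :=
  IsTorfIn Λ W Jlo ∧ IsTorfIn Λ W Jhi ∧ Ilo ⊆ Jlo ∧ Jlo ⊆ Jhi ∧ Jhi ⊆ Ihi ∧
    Jhi = popIn Λ W Ihi Jlo

/-- The direct sum `⊕_{a ≤ j ≤ b} X j`. -/
def seqSum (X : ℕ → Mdl Λ) (a b : ℕ) : Mdl Λ :=
  ModuleCat.of Λ ((j : Finset.Icc a b) → ↥(X j.1))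

/-- `(X 1, …, X m)` is a cogen-preordered (basic) `τ⁻¹`-rigid module of length `m`. -/
def CogenPreordered (m : ℕ) (X : ℕ → Mdl Λ) : Prop :=
  IsBasic Λ (seqSum Λ X 1 m) ∧ TauInvRigid Λ (seqSum Λ X 1 m) ∧
  ∀ k, 1 ≤ k → k ≤ m → ∀ Y, Indec Λ Y → IsSummand Λ Y (X k) →
    ∀ W, IsDeleted Λ (seqSum Λ X k m) (addOf Λ Y) W → Y ∉ Cogen Λ W

/-- `X` is cogen-minimal. -/
def CogenMinimal (X : Mdl Λ) : Prop :=
  ∀ Y, Indec Λ Y → IsSummand Λ Y X →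
    ∀ W, IsDeleted Λ X (addOf Λ Y) W → Y ∉ Cogen Λ W

/-- `X` is a split injective object of `C`. -/
def SplitInjIn (C : Set (Mdl Λ)) (X : Mdl Λ) : Prop :=
  X ∈ C ∧ ∀ Y ∈ C, ∀ f : ↥X →ₗ[Λ] ↥Y, Injective f →
    ∃ r : ↥Y →ₗ[Λ] ↥X, r.comp f = LinearMap.id

/-- `I` is the basic module `I_s(C)` whose additive closure consists of the
split injective objects of `C`. -/
def IsMinSplitInj (C : Set (Mdl Λ)) (I : Mdl Λ) : Prop :=
  IsBasic Λ I ∧ addOf Λ I = {X | SplitInjIn Λ C X}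

/-- `C` is an ICE-closed subcategory of `mod Λ`. -/
def IsICE (C : Set (Mdl Λ)) : Prop :=
  (∀ M ∈ C, Module.Finite Λ ↥M) ∧
  (∀ M N, IsoM Λ M N → M ∈ C → N ∈ C) ∧
  (∃ Z ∈ C, IsZeroM Λ Z) ∧
  (∀ (A E B : Mdl Λ) (f : ↥A →ₗ[Λ] ↥E) (g : ↥E →ₗ[Λ] ↥B),
      IsSESeq Λ f g → A ∈ C → B ∈ C → Module.Finite Λ ↥E → E ∈ C) ∧
  (∀ M N : Mdl Λ, M ∈ C → N ∈ C → ∀ f : ↥M →ₗ[Λ] ↥N,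
      ModuleCat.of Λ ↥(LinearMap.range f) ∈ C ∧
      ModuleCat.of Λ (↥N ⧸ LinearMap.range f) ∈ C)

/-- `W_L(C)`. -/
def WL (C : Set (Mdl Λ)) : Set (Mdl Λ) :=
  {X | X ∈ C ∧ ∀ Y ∈ C, ∀ f : ↥Y →ₗ[Λ] ↥X, ModuleCat.of Λ ↥(LinearMap.ker f) ∈ C}

/-- An ICE-sequence. -/
def IsICESeq (C : ℤ → Set (Mdl Λ)) : Prop :=
  ∀ k : ℤ, IsICE Λ (C k) ∧ IsTorsIn Λ (WL Λ (C k)) (C (k + 1))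

/-- The ICE-sequence `C` has length `m`. -/
def ICESeqLen (C : ℤ → Set (Mdl Λ)) (m : ℕ) : Prop :=
  C 1 = zeroSubcat Λ ∧ C (-(m : ℤ)) = modAll Λ

/-- The heart `G ∩ ⊥F` of an interval `[F, G]` of torsion-free classes. -/
def heart (F G : Set (Mdl Λ)) : Set (Mdl Λ) := G ∩ perpL Λ F

/-- The `τ⁻¹`-perpendicular category `J^d(X) = (τ⁻¹X)^⊥ ∩ ⊥X`. -/
def Jd (X : Mdl Λ) : Set (Mdl Λ) := perpTauInv Λ X ∩ perpL Λ (addOf Λ X)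

/-- `B * C`: objects which are extensions of an object of `C` by an object of `B`. -/
def starProd (B C : Set (Mdl Λ)) : Set (Mdl Λ) :=
  {E | ∃ Mb Mc : Mdl Λ, Mb ∈ B ∧ Mc ∈ C ∧
    ∃ (f : ↥Mb →ₗ[Λ] ↥E) (g : ↥E →ₗ[Λ] ↥Mc), IsSESeq Λ f g}

/-- The torsion submodule `t_X M`: the largest submodule of `M` lying in `⊥X`. -/
def tSub (X M : Mdl Λ) : Submodule Λ ↥M :=
  sSup {N : Submodule Λ ↥M | ∀ f : ↥N →ₗ[Λ] ↥X, f = 0}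

/-- The torsion functor value `t_X M`. -/
def tMod (X M : Mdl Λ) : Mdl Λ := ModuleCat.of Λ ↥(tSub Λ X M)

/-- `X` is a `τ⁻¹`-rigid object of the wide subcategory `W` (with respect to the
inverse AR translate of `W`); encoded via Auslander–Smalø in `W`, using
`Cogen_W X = Cogen X ∩ W` and `Ext¹_W = Ext¹`. -/
def TauInvRigidIn (W : Set (Mdl Λ)) (X : Mdl Λ) : Prop :=
  X ∈ W ∧ ∀ Y ∈ Cogen Λ X ∩ W, Ext1Zero Λ Y X

/-- `X` is cogen-minimal as an object of the wide subcategory `W`. -/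
def CogenMinimalIn (W : Set (Mdl Λ)) (X : Mdl Λ) : Prop :=
  ∀ Y, Indec Λ Y → IsSummand Λ Y X →
    ∀ Wd, IsDeleted Λ X (addOf Λ Y) Wd → Y ∉ Cogen Λ Wd ∩ W

end Paper

/-! ### Linear algebra over a finite-dimensional algebra -/

namespace Paper

section Algebra

variable {Λ : Type} [Ring Λ]

section Maps

variable {A B E Y : Type} [AddCommGroup A] [Module Λ A] [AddCommGroup B] [Module Λ B]
  [AddCommGroup E] [Module Λ E] [AddCommGroup Y] [Module Λ Y]

lemma factor_surj {g : E →ₗ[Λ] A} (hg : Surjective g) (h : E →ₗ[Λ] Y)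
    (hk : LinearMap.ker g ≤ LinearMap.ker h) : ∃ h' : A →ₗ[Λ] Y, h' ∘ₗ g = h := by
  refine ⟨(LinearMap.ker g).liftQ h hk ∘ₗ (g.quotKerEquivOfSurjective hg).symm.toLinearMap, ?_⟩
  ext x
  have : (g.quotKerEquivOfSurjective hg).symm (g x) = (LinearMap.ker g).mkQ x := by
    rw [LinearEquiv.symm_apply_eq]; rfl
  simp [this]

lemma factor_inj {f : A →ₗ[Λ] E} (hf : Injective f) (h : Y →ₗ[Λ] E)
    (hr : LinearMap.range h ≤ LinearMap.range f) : ∃ h' : Y →ₗ[Λ] A, f ∘ₗ h' = h := by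
  refine ⟨(LinearEquiv.ofInjective f hf).symm.toLinearMap ∘ₗ
    h.codRestrict (LinearMap.range f) (fun c => hr ⟨c, rfl⟩), ?_⟩
  ext x
  have := (LinearEquiv.ofInjective f hf).apply_symm_apply
    (h.codRestrict (LinearMap.range f) (fun c => hr ⟨c, rfl⟩) x)
  exact congrArg Subtype.val this

lemma inj_extend {I : Type} [AddCommGroup I] [Module Λ I] (hI : Module.Injective Λ I)
    {f : A →ₗ[Λ] B} (hf : Injective f) (g : A →ₗ[Λ] I) : ∃ h : B →ₗ[Λ] I, h ∘ₗ f = g := by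
  obtain ⟨h, hh⟩ := hI.out f hf g
  exact ⟨h, LinearMap.ext hh⟩

/-- A retract of an injective module is injective. -/
lemma injective_retract {I E : Type} [AddCommGroup I] [Module Λ I] [AddCommGroup E] [Module Λ E]
    (hI : Module.Injective Λ I) (i : E →ₗ[Λ] I) (q : I →ₗ[Λ] E) (h : q ∘ₗ i = LinearMap.id) :
    Module.Injective Λ E := by
  refine ⟨fun A B _ _ _ _ f hf g => ?_⟩
  obtain ⟨k, hk⟩ := hI.out f hf (i ∘ₗ g)
  refine ⟨q ∘ₗ k, fun x => ?_⟩
  simp only [LinearMap.comp_apply, hk]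
  exact LinearMap.congr_fun h _

lemma left_inv_inj {i : A →ₗ[Λ] B} {q : B →ₗ[Λ] A} (h : q ∘ₗ i = LinearMap.id) :
    Injective i :=
  LeftInverse.injective (g := q) fun x => LinearMap.congr_fun h x

lemma left_inv_surj {i : A →ₗ[Λ] B} {q : B →ₗ[Λ] A} (h : q ∘ₗ i = LinearMap.id) :
    Surjective q :=
  RightInverse.surjective (g := i) fun x => LinearMap.congr_fun h x

/-- Lifting maps out of a finite power can be done componentwise. -/
lemma lift_pi {u : B →ₗ[Λ] E} (h : ∀ a : A →ₗ[Λ] E, ∃ ψ : A →ₗ[Λ] B, u ∘ₗ ψ = a) {n : ℕ}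
    (w : (Fin n → A) →ₗ[Λ] E) : ∃ ψ : (Fin n → A) →ₗ[Λ] B, u ∘ₗ ψ = w := by
  choose g hg using fun k : Fin n => h (w ∘ₗ LinearMap.single Λ (fun _ => A) k)
  refine ⟨∑ k, g k ∘ₗ LinearMap.proj k, LinearMap.pi_ext fun k m => ?_⟩
  have := LinearMap.congr_fun (hg k) m
  simp only [LinearMap.comp_apply, LinearMap.single_apply] at this
  simp only [LinearMap.comp_apply, LinearMap.sum_apply, LinearMap.proj_apply, map_sum]
  rw [Finset.sum_eq_single k, ← this]
  · simp
  · intro b _ hb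
    simp [hb]
  · simp

/-- Fitting's lemma: some power of an endomorphism `f` of a finite length module has a left multiple
that is idempotent with the same kernel, namely the projection onto the stable image of `f` along
the stable kernel. -/
lemma fitting [IsArtinian Λ A] [IsNoetherian Λ A] (f : Module.End Λ A) :
    ∃ n : ℕ, n ≠ 0 ∧ ∃ c : Module.End Λ A, IsIdempotentElem (c * f ^ n) ∧
      LinearMap.ker (c * f ^ n) = LinearMap.ker (f ^ n) := by
  obtain ⟨n, hn0, hn⟩ : ∃ n : ℕ, n ≠ 0 ∧
      IsCompl (LinearMap.ker (f ^ n)) (LinearMap.range (f ^ n)) := by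
    obtain ⟨N, hN⟩ := Filter.eventually_atTop.1 f.eventually_isCompl_ker_pow_range_pow
    exact ⟨N + 1, by omega, hN _ (by omega)⟩
  refine ⟨n, hn0, ?_⟩
  generalize f ^ n = g at hn
  have hinj : Injective (g ∘ₗ (LinearMap.range g).subtype) := by
    rw [← LinearMap.ker_eq_bot, LinearMap.ker_eq_bot']
    intro r hr
    exact Subtype.ext (Submodule.disjoint_def.1 hn.disjoint r.1 hr r.2)
  have hrange : LinearMap.range g ≤ LinearMap.range (g ∘ₗ (LinearMap.range g).subtype) := by
    rintro _ ⟨x, rfl⟩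
    obtain ⟨k, hk, r, hr, rfl⟩ := Submodule.mem_sup.1
      (show x ∈ LinearMap.ker g ⊔ LinearMap.range g by rw [hn.sup_eq_top]; trivial)
    exact ⟨⟨r, hr⟩, by simpa using hk⟩
  obtain ⟨c', hc'⟩ := factor_inj hinj g hrange
  have hge : ∀ x, g (c' x).1 = g x := fun x => LinearMap.congr_fun hc' x
  have hkc : LinearMap.ker g ≤ LinearMap.ker c' := by
    intro x hx
    rw [LinearMap.mem_ker] at hx ⊢
    apply hinj
    simp [hge, hx]
  obtain ⟨d, hd⟩ := factor_surj (g := g.rangeRestrict) g.surjective_rangeRestrict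
    c' (by simpa using hkc)
  let p : A →ₗ[Λ] LinearMap.range g := Submodule.projectionOnto _ _ hn.symm
  have hc : ∀ x, ((LinearMap.range g).subtype ∘ₗ d ∘ₗ p : Module.End Λ A) (g x) = (c' x).1 := by
    intro x
    have h1 : p (g x) = g.rangeRestrict x :=
      Submodule.projectionOnto_apply_left hn.symm (g.rangeRestrict x)
    have h2 := LinearMap.congr_fun hd x
    simp only [LinearMap.comp_apply] at h2 ⊢
    rw [h1, h2]; rfl
  refine ⟨(LinearMap.range g).subtype ∘ₗ d ∘ₗ p, ?_, ?_⟩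
  · ext x
    rw [Module.End.mul_apply, Module.End.mul_apply, Module.End.mul_apply, hc, hc]
    congr 1
    apply hinj
    simp only [LinearMap.comp_apply, Submodule.subtype_apply, hge]
  · ext x
    rw [LinearMap.mem_ker, LinearMap.mem_ker, Module.End.mul_apply, hc]
    constructor
    · intro h
      rw [← hge, h, map_zero]
    · intro h
      have := hkc h
      rw [LinearMap.mem_ker] at this
      simp [this]

end Maps

section FieldPart

variable (K : Type) [Field K] [Algebra K Λ]

/-- The coinduced module `Hom_K(Λ, K)`, an injective cogenerator of `mod Λ`. -/
def Coind (K Λ : Type) [Field K] [Ring Λ] [Algebra K Λ] : Type := Λ →ₗ[K] K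

instance : AddCommGroup (Coind K Λ) := inferInstanceAs (AddCommGroup (Λ →ₗ[K] K))

/-- The left action `(a • f) x = f (x * a)`. -/
instance : Module Λ (Coind K Λ) where
  smul a f := (show Λ →ₗ[K] K from f) ∘ₗ LinearMap.mulRight K a
  one_smul f := by
    refine LinearMap.ext fun x => ?_
    exact congrArg (show Λ →ₗ[K] K from f) (mul_one x)
  mul_smul a b f := by
    refine LinearMap.ext fun x => ?_
    exact congrArg (show Λ →ₗ[K] K from f) (mul_assoc x a b).symm
  smul_zero a := rfl
  smul_add a f g := rfl
  add_smul a b f := by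
    refine LinearMap.ext fun x => ?_
    exact (congrArg (show Λ →ₗ[K] K from f) (mul_add x a b)).trans (map_add _ _ _)
  zero_smul f := by
    refine LinearMap.ext fun x => ?_
    exact (congrArg (show Λ →ₗ[K] K from f) (mul_zero x)).trans (map_zero _)

/-- The `Λ`-linear map into `Hom_K(Λ, K)` corresponding to a `K`-linear functional. -/
def toCoind {M : Type} [AddCommGroup M] [Module Λ M] [Module K M] [IsScalarTower K Λ M]
    (φ : M →ₗ[K] K) : M →ₗ[Λ] Coind K Λ where
  toFun m := (φ ∘ₗ (LinearMap.toSpanSingleton Λ M m).restrictScalars K : Λ →ₗ[K] K)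
  map_add' m n := by
    refine LinearMap.ext fun x => ?_
    show φ (x • (m + n)) = φ (x • m) + φ (x • n)
    rw [smul_add, map_add]
  map_smul' a m := by
    refine LinearMap.ext fun x => ?_
    show φ (x • a • m) = φ ((x * a) • m)
    rw [mul_smul]

/-- Evaluation at `1` on the coinduced module. -/
def evOne : Coind K Λ → K := fun f => (show Λ →ₗ[K] K from f) 1

lemma evOne_toCoind {M : Type} [AddCommGroup M] [Module Λ M] [Module K M] [IsScalarTower K Λ M]
    (φ : M →ₗ[K] K) (m : M) : evOne K (toCoind K φ m : Coind K Λ) = φ m := by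
  show φ ((1 : Λ) • m) = φ m
  rw [one_smul]

lemma coind_ext {f g : Coind K Λ} (h : ∀ a : Λ, evOne K (a • f) = evOne K (a • g)) : f = g := by
  refine LinearMap.ext fun x => ?_
  have : (show Λ →ₗ[K] K from f) (1 * x) = (show Λ →ₗ[K] K from g) (1 * x) := h x
  rwa [one_mul] at this

/-- `Hom_K(Λ, -)` is right adjoint to the exact restriction to `K`, so it preserves injectives. -/
lemma coind_injective : Module.Injective Λ (Coind K Λ) := by
  refine ⟨fun X Y _ _ _ _ f hf g => ?_⟩
  let : Module K X := Module.compHom X (algebraMap K Λ)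
  let : Module K Y := Module.compHom Y (algebraMap K Λ)
  have : IsScalarTower K Λ X := IsScalarTower.of_algebraMap_smul fun _ _ => rfl
  have : IsScalarTower K Λ Y := IsScalarTower.of_algebraMap_smul fun _ _ => rfl
  let ev : X →ₗ[K] K :=
    { toFun := fun x => evOne K (g x)
      map_add' := fun x y => by rw [map_add]; rfl
      map_smul' := fun k x => by
        have : g (k • x) = algebraMap K Λ k • g x := g.map_smul (algebraMap K Λ k) x
        rw [this]
        show (show Λ →ₗ[K] K from g x) (1 * algebraMap K Λ k) = k • (show Λ →ₗ[K] K from g x) 1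
        rw [← map_smul, Algebra.smul_def, one_mul, mul_one] }
  obtain ⟨q, hq⟩ := (f.restrictScalars K).exists_leftInverse_of_injective
    (LinearMap.ker_eq_bot.2 hf)
  refine ⟨toCoind K (ev ∘ₗ q), fun x => coind_ext K fun a => ?_⟩
  rw [← map_smul, ← map_smul, ← map_smul, evOne_toCoind]
  have : q (f (a • x)) = a • x := LinearMap.congr_fun hq (a • x)
  simp only [LinearMap.comp_apply, this]
  rfl

lemma coind_finite [FiniteDimensional K Λ] : Module.Finite Λ (Coind K Λ) := by
  let : Module K (Coind K Λ) := inferInstanceAs (Module K (Λ →ₗ[K] K))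
  have : Module.Finite K (Coind K Λ) := inferInstanceAs (Module.Finite K (Λ →ₗ[K] K))
  have : IsScalarTower K Λ (Coind K Λ) := by
    refine IsScalarTower.of_algebraMap_smul fun k f => LinearMap.ext fun x => ?_
    show (show Λ →ₗ[K] K from f) (x * algebraMap K Λ k) = k • (show Λ →ₗ[K] K from f) x
    rw [← map_smul, Algebra.smul_def, Algebra.commutes]
  exact Module.Finite.of_restrictScalars_finite K Λ _

/-- `Hom_K(Λ, K)` is a cogenerator. -/
lemma coind_separates {M : Type} [AddCommGroup M] [Module Λ M] (m : M) (hm : m ≠ 0) :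
    ∃ f : M →ₗ[Λ] Coind K Λ, f m ≠ 0 := by
  let : Module K M := Module.compHom M (algebraMap K Λ)
  have : IsScalarTower K Λ M := IsScalarTower.of_algebraMap_smul fun _ _ => rfl
  obtain ⟨φ, hφ⟩ : ∃ φ : Module.Dual K M, φ m ≠ 0 := by
    by_contra! h
    exact hm ((Module.forall_dual_apply_eq_zero_iff K m).1 h)
  refine ⟨toCoind K φ, fun h => hφ ?_⟩
  rw [← evOne_toCoind (Λ := Λ) K φ m, h]
  rfl

/-- An endomorphism ring is finite-dimensional over `K`, hence artinian, so that its Jacobson radical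
is nilpotent. -/
lemma end_artinian [FiniteDimensional K Λ] (M : Type) [AddCommGroup M] [Module Λ M]
    [Module.Finite Λ M] : IsArtinianRing (Module.End Λ M) := by
  let : Module K M := Module.compHom M (algebraMap K Λ)
  have : IsScalarTower K Λ M := IsScalarTower.of_algebraMap_smul fun _ _ => rfl
  have : Module.Finite K M := Module.Finite.trans Λ M
  have : Module.Finite K (Module.End Λ M) :=
    Module.Finite.of_injective (LinearMap.restrictScalarsₗ K Λ M M K)
      (LinearMap.restrictScalars_injective K)
  exact IsArtinianRing.of_finite K _

/-- The action of a scalar of `K` as a `Λ`-linear endomorphism. -/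
def scal (c : K) (N : Type) [AddCommGroup N] [Module Λ N] : N →ₗ[Λ] N where
  toFun n := algebraMap K Λ c • n
  map_add' := smul_add _
  map_smul' a n := by
    simp only [RingHom.id_apply, ← mul_smul, Algebra.commutes]

lemma map_scal (c : K) {M N : Type} [AddCommGroup N] [Module Λ N] [AddCommGroup M] [Module Λ M]
    (f : M →ₗ[Λ] N) (m : M) : f (scal (Λ := Λ) K c M m) = scal (Λ := Λ) K c N (f m) :=
  f.map_smul _ _

/-- `Hom(M, N)` is finitely generated over `K`. -/
lemma hom_span [FiniteDimensional K Λ] (M N : Type) [AddCommGroup M] [Module Λ M]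
    [AddCommGroup N] [Module Λ N] [Module.Finite Λ M] [Module.Finite Λ N] :
    ∃ (r : ℕ) (u : Fin r → M →ₗ[Λ] N), ∀ a : M →ₗ[Λ] N, ∃ c : Fin r → K,
      a = ∑ k, scal K (c k) N ∘ₗ u k := by
  let : Module K M := Module.compHom M (algebraMap K Λ)
  have : IsScalarTower K Λ M := IsScalarTower.of_algebraMap_smul fun _ _ => rfl
  let : Module K N := Module.compHom N (algebraMap K Λ)
  have : IsScalarTower K Λ N := IsScalarTower.of_algebraMap_smul fun _ _ => rfl
  have : Module.Finite K M := Module.Finite.trans Λ M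
  have : Module.Finite K N := Module.Finite.trans Λ N
  have : Module.Finite K (M →ₗ[Λ] N) :=
    Module.Finite.of_injective (LinearMap.restrictScalarsₗ K Λ M N K)
      (LinearMap.restrictScalars_injective K)
  obtain ⟨r, s, hs⟩ := Module.Finite.exists_fin (R := K) (M := M →ₗ[Λ] N)
  refine ⟨r, s, fun a => ?_⟩
  obtain ⟨c, hc⟩ := (Submodule.mem_span_range_iff_exists_fun K).1
    (show a ∈ Submodule.span K (Set.range s) by rw [hs]; trivial)
  exact ⟨c, hc.symm⟩

/-- Right `add N`-approximations exist, because `Hom(N, M)` is finitely generated over `K`. -/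
lemma right_add_approx [FiniteDimensional K Λ] (M N : Type) [AddCommGroup M] [Module Λ M]
    [AddCommGroup N] [Module Λ N] [Module.Finite Λ M] [Module.Finite Λ N] :
    ∃ (r : ℕ) (u : (Fin r → N) →ₗ[Λ] M), ∀ a : N →ₗ[Λ] M, ∃ ψ : N →ₗ[Λ] (Fin r → N),
      u ∘ₗ ψ = a := by
  obtain ⟨r, s, hs⟩ := hom_span K (Λ := Λ) N M
  refine ⟨r, ∑ i, s i ∘ₗ LinearMap.proj i, fun a => ?_⟩
  obtain ⟨c, rfl⟩ := hs a
  refine ⟨LinearMap.pi fun i => scal K (c i) N, ?_⟩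
  ext m
  simp [LinearMap.sum_apply, map_scal]

end FieldPart

end Algebra
end Paper

/-! ### Cogenerated modules and minimal injective copresentations -/

namespace Paper

section Cogenerated

set_option linter.unusedSectionVars false

variable {Λ : Type} [Ring Λ] [IsArtinianRing Λ]

lemma finite_submodule {M : Type} [AddCommGroup M] [Module Λ M] [Module.Finite Λ M]
    (N : Submodule Λ M) : Module.Finite Λ N := inferInstance

lemma finite_of_inj {M N : Type} [AddCommGroup M] [Module Λ M] [AddCommGroup N] [Module Λ N]
    [Module.Finite Λ M] (f : N →ₗ[Λ] M) (hf : Injective f) : Module.Finite Λ N :=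
  Module.Finite.of_injective f hf

/-- `Cogen X` consists of the finitely generated modules on which maps to `X` separate points. -/
lemma mem_cogen {X M : Mdl Λ} : M ∈ Cogen Λ X ↔
    Module.Finite Λ M ∧ ∀ m : M, m ≠ 0 → ∃ f : M →ₗ[Λ] X, f m ≠ 0 := by
  constructor
  · rintro ⟨hM, Y, ⟨n, i, p, hip⟩, f, hf⟩
    refine ⟨hM, fun m hm => ?_⟩
    by_contra! h
    apply hm
    apply hf
    rw [map_zero]
    apply left_inv_inj hip
    rw [map_zero]
    funext k
    exact h (LinearMap.proj k ∘ₗ i ∘ₗ f)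
  · rintro ⟨hM, h⟩
    -- finitely many maps suffice: take a kernel that is minimal among maps `M → Xⁿ`
    let S : Set (Submodule Λ M) :=
      {L | ∃ (n : ℕ) (φ : M →ₗ[Λ] (Fin n → X)), LinearMap.ker φ = L}
    obtain ⟨L, ⟨n, φ, rfl⟩, hmin⟩ := wellFounded_lt.has_min S ⟨_, 0, 0, rfl⟩
    refine ⟨hM, ModuleCat.of Λ (Fin n → X), ⟨n, LinearMap.id, LinearMap.id, rfl⟩, φ, ?_⟩
    rw [← LinearMap.ker_eq_bot, LinearMap.ker_eq_bot']
    intro m hm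
    by_contra hm0
    obtain ⟨f, hf⟩ := h m hm0
    let φ' : M →ₗ[Λ] (Fin (n + 1) → X) :=
      LinearMap.pi (Fin.cons f fun i => LinearMap.proj i ∘ₗ φ)
    have h0 : ∀ x, φ' x 0 = f x := fun x => rfl
    have hs : ∀ x (i : Fin n), φ' x i.succ = φ x i := fun x i => rfl
    refine hmin (LinearMap.ker φ') ⟨_, φ', rfl⟩ (lt_of_le_of_ne ?_ ?_)
    · intro x hx
      rw [LinearMap.mem_ker] at hx ⊢
      funext i
      rw [← hs, hx]; rfl
    · intro heq
      have : m ∈ LinearMap.ker φ' := by rw [heq]; exact hm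
      rw [LinearMap.mem_ker] at this
      apply hf
      rw [← h0, this]; rfl

lemma cogen_embed {X M : Mdl Λ} (h : M ∈ Cogen Λ X) :
    ∃ (n : ℕ) (e : M →ₗ[Λ] (Fin n → X)), Injective e := by
  obtain ⟨-, Y, ⟨n, i, p, hip⟩, f, hf⟩ := h
  exact ⟨n, i ∘ₗ f, (left_inv_inj hip).comp hf⟩

lemma self_mem_cogen (X : Mdl Λ) (hX : Module.Finite Λ X) : X ∈ Cogen Λ X :=
  mem_cogen.2 ⟨hX, fun _ hm => ⟨LinearMap.id, hm⟩⟩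

lemma cogen_of_sub {X M N : Mdl Λ} (hM : M ∈ Cogen Λ X) (f : N →ₗ[Λ] M) (hf : Injective f) :
    N ∈ Cogen Λ X := by
  have := hM.1
  refine mem_cogen.2 ⟨finite_of_inj f hf, fun m hm => ?_⟩
  obtain ⟨g, hg⟩ := (mem_cogen.1 hM).2 (f m) (fun h => hm (hf (by rw [h, map_zero])))
  exact ⟨g ∘ₗ f, hg⟩

lemma cogen_trans {X Y M : Mdl Λ} (hY : Y ∈ Cogen Λ X) (hM : M ∈ Cogen Λ Y) : M ∈ Cogen Λ X := by
  refine mem_cogen.2 ⟨hM.1, fun m hm => ?_⟩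
  obtain ⟨g, hg⟩ := (mem_cogen.1 hM).2 m hm
  obtain ⟨k, hk⟩ := (mem_cogen.1 hY).2 _ hg
  exact ⟨k ∘ₗ g, hk⟩

lemma sub_mem_cogen {M : Mdl Λ} (hM : Module.Finite Λ M) (N : Submodule Λ M) :
    ModuleCat.of Λ N ∈ Cogen Λ M :=
  cogen_of_sub (self_mem_cogen M hM) N.subtype N.injective_subtype

/-- Every embedding of `C` into a finitely generated injective module can be cut down to an
injective hull of `C`. -/
lemma inj_hull_aux {C : Type} [AddCommGroup C] [Module Λ C] (ℓ : ℕ∞) :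
    ∀ (E : Mdl Λ), Module.length Λ E = ℓ → Module.Finite Λ E → Module.Injective Λ E →
      ∀ c : C →ₗ[Λ] E, Injective c →
      ∃ E : Mdl Λ, Module.Finite Λ E ∧ Module.Injective Λ E ∧ ∃ c : C →ₗ[Λ] E, Injective c ∧
        ∀ U : Submodule Λ E, U ⊓ LinearMap.range c = ⊥ → U = ⊥ := by
  induction ℓ using WellFoundedLT.induction with
  | ind ℓ ih =>
  intro E hℓ hfin hinj c hc
  by_cases hess : ∀ U : Submodule Λ E, U ⊓ LinearMap.range c = ⊥ → U = ⊥
  · exact ⟨E, hfin, hinj, c, hc, hess⟩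
  push Not at hess
  obtain ⟨U, hU, hU0⟩ := hess
  -- the embedding extends to an endomorphism `y` killing `U`; pass to its stable image
  have hqc : Injective (U.mkQ ∘ₗ c) := by
    rw [← LinearMap.ker_eq_bot, LinearMap.ker_eq_bot']
    intro x hx
    have hxU : c x ∈ U := by simpa using hx
    have : c x ∈ U ⊓ LinearMap.range c := ⟨hxU, x, rfl⟩
    rw [hU, Submodule.mem_bot] at this
    exact hc (by rw [this, map_zero])
  obtain ⟨g, hg⟩ := inj_extend hinj hqc c
  let y : Module.End Λ E := g ∘ₗ U.mkQ
  have hyc : ∀ x, y (c x) = c x := fun x => LinearMap.congr_fun hg x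
  have hyn : ∀ (n : ℕ) x, (y ^ n) (c x) = c x := by
    intro n x
    induction n with
    | zero => simp
    | succ n ihn => rw [pow_succ, Module.End.mul_apply, hyc, ihn]
  obtain ⟨n, hn0, k, hid, hker⟩ := fitting y
  set e := k * y ^ n with he
  have hUe : U ≤ LinearMap.ker e := by
    rw [hker]
    intro x hx
    obtain ⟨n, rfl⟩ := Nat.exists_eq_succ_of_ne_zero hn0
    have : y x = 0 := by simp [y, (Submodule.Quotient.mk_eq_zero U).2 hx]
    rw [LinearMap.mem_ker, Nat.succ_eq_add_one, pow_succ, Module.End.mul_apply, this, map_zero]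
  have hee : ∀ x, e (e x) = e x := fun x => LinearMap.congr_fun hid x
  have hne : LinearMap.range e ≠ ⊤ := by
    intro htop
    apply hU0
    rw [eq_bot_iff]
    intro x hx
    obtain ⟨z, rfl⟩ : x ∈ LinearMap.range e := by rw [htop]; trivial
    have := hUe hx
    rw [LinearMap.mem_ker, hee] at this
    exact this
  have hret : e.rangeRestrict ∘ₗ (LinearMap.range e).subtype = LinearMap.id := by
    ext ⟨_, z, rfl⟩
    simp [hee]
  refine ih _ (hℓ ▸ Submodule.length_lt hne) (ModuleCat.of Λ (LinearMap.range e)) rfl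
    (finite_submodule _) (injective_retract hinj _ _ hret) (e.rangeRestrict ∘ₗ c) ?_
  rw [← LinearMap.ker_eq_bot, LinearMap.ker_eq_bot']
  intro x hx
  have h1 : c x ∈ LinearMap.ker e := congrArg Subtype.val hx
  rw [hker, LinearMap.mem_ker, hyn] at h1
  exact hc (by rw [h1, map_zero])

lemma exists_inj_embedding (K : Type) [Field K] [Algebra K Λ] [FiniteDimensional K Λ]
    (C : Mdl Λ) (hC : Module.Finite Λ C) :
    ∃ E : Mdl Λ, Module.Finite Λ E ∧ Module.Injective Λ E ∧ ∃ c : C →ₗ[Λ] E, Injective c := by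
  obtain ⟨-, Y, ⟨n, i, p, hip⟩, f, hf⟩ := (mem_cogen (X := ModuleCat.of Λ (Coind K Λ)) (M := C)).2
    ⟨hC, fun m hm => coind_separates K m hm⟩
  have := coind_finite (Λ := Λ) K
  have := coind_injective (Λ := Λ) K
  exact ⟨ModuleCat.of Λ (Fin n → Coind K Λ), inferInstanceAs (Module.Finite Λ (Fin n → Coind K Λ)),
    inferInstanceAs (Module.Injective Λ (Fin n → Coind K Λ)), i ∘ₗ f,
    (left_inv_inj hip).comp hf⟩

/-- A finitely generated injective copresentation `0 → X → I0 → I1` that is minimal at `I1`, i.e.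
`I1` is an injective hull of the image of `I0`. -/
structure Copres (X : Mdl Λ) where
  /-- the first injective term -/
  I0 : Mdl Λ
  /-- the second injective term -/
  I1 : Mdl Λ
  fin0 : Module.Finite Λ I0
  fin1 : Module.Finite Λ I1
  inj0 : Module.Injective Λ I0
  inj1 : Module.Injective Λ I1
  /-- the embedding of `X` -/
  j : X →ₗ[Λ] I0
  /-- the differential -/
  p : I0 →ₗ[Λ] I1
  hj : Injective j
  hker : LinearMap.range j = LinearMap.ker p
  ess : ∀ U : Submodule Λ I1, U ⊓ LinearMap.range p = ⊥ → U = ⊥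

lemma exists_copres (K : Type) [Field K] [Algebra K Λ] [FiniteDimensional K Λ]
    (X : Mdl Λ) (hX : Module.Finite Λ X) : Nonempty (Copres X) := by
  obtain ⟨E, hE, hEi, j, hj⟩ := exists_inj_embedding K X hX
  let C : Mdl Λ := ModuleCat.of Λ (E ⧸ LinearMap.range j)
  have hC : Module.Finite Λ C := inferInstanceAs (Module.Finite Λ (E ⧸ LinearMap.range j))
  obtain ⟨E', hE', hEi', c', hc'⟩ := exists_inj_embedding K C hC
  obtain ⟨E₁, hE₁, hEi₁, c, hc, hess⟩ := inj_hull_aux _ E' rfl hE' hEi' c' hc'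
  refine ⟨⟨E, E₁, hE, hE₁, hEi, hEi₁, j, c ∘ₗ (LinearMap.range j).mkQ, hj, ?_, ?_⟩⟩
  · rw [LinearMap.ker_comp, LinearMap.ker_eq_bot.2 hc, Submodule.comap_bot, Submodule.ker_mkQ]
  · intro U hU
    apply hess
    rwa [LinearMap.range_comp, Submodule.range_mkQ, Submodule.map_top] at hU

namespace Copres

variable {X : Mdl Λ} (P : Copres X)

lemma p_j (x : X) : P.p (P.j x) = 0 := by
  have : P.j x ∈ LinearMap.range P.j := ⟨x, rfl⟩
  rwa [P.hker, LinearMap.mem_ker] at this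

/-- A map killed by the differential factors through `X`. -/
lemma factor_X {E : Type} [AddCommGroup E] [Module Λ E] (h : E →ₗ[Λ] P.I0)
    (hp : ∀ x, P.p (h x) = 0) : ∃ h' : E →ₗ[Λ] X, P.j ∘ₗ h' = h := by
  apply factor_inj P.hj
  rintro _ ⟨x, rfl⟩
  rw [P.hker]
  exact hp x

/-- If `N` lifts its maps into the image of the differential, maps to `X` extend along any
short exact sequence ending in `N`. -/
lemma extend_of_lift {S E N : Type} [AddCommGroup S] [Module Λ S] [AddCommGroup E] [Module Λ E]
    [AddCommGroup N] [Module Λ N]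
    (H : ∀ φ : N →ₗ[Λ] P.I1, LinearMap.range φ ≤ LinearMap.range P.p →
      ∃ g : N →ₗ[Λ] P.I0, P.p ∘ₗ g = φ)
    {f : S →ₗ[Λ] E} {π : E →ₗ[Λ] N} (hf : Injective f) (hπ : Surjective π)
    (hfπ : LinearMap.range f = LinearMap.ker π) (s : S →ₗ[Λ] X) :
    ∃ k : E →ₗ[Λ] X, k ∘ₗ f = s := by
  obtain ⟨k, hk⟩ := inj_extend P.inj0 hf (P.j ∘ₗ s)
  obtain ⟨φ, hφ⟩ := factor_surj hπ (P.p ∘ₗ k) (by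
    rw [← hfπ]
    rintro _ ⟨x, rfl⟩
    have := LinearMap.congr_fun hk x
    simp only [LinearMap.comp_apply] at this
    simp [this, P.p_j])
  obtain ⟨g, hg⟩ := H φ (by
    rintro _ ⟨x, rfl⟩
    obtain ⟨e, rfl⟩ := hπ x
    exact ⟨k e, (LinearMap.congr_fun hφ e).symm⟩)
  obtain ⟨r, hr⟩ := P.factor_X (k - g ∘ₗ π) (fun x => by
    have h1 := LinearMap.congr_fun hφ x
    have h2 := LinearMap.congr_fun hg (π x)
    simp only [LinearMap.comp_apply] at h1 h2
    simp [h2, h1])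
  refine ⟨r, LinearMap.ext fun x => P.hj ?_⟩
  have h1 := LinearMap.congr_fun hr (f x)
  have h2 : π (f x) = 0 := by
    rw [← LinearMap.mem_ker, ← hfπ]; exact ⟨x, rfl⟩
  have h3 := LinearMap.congr_fun hk x
  simp only [LinearMap.comp_apply, LinearMap.sub_apply, h2, map_zero, sub_zero] at h1 h3 ⊢
  rw [h1, h3]

lemma section_of_retraction {S E N : Type} [AddCommGroup S] [Module Λ S] [AddCommGroup E]
    [Module Λ E] [AddCommGroup N] [Module Λ N] {f : S →ₗ[Λ] E} {π : E →ₗ[Λ] N}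
    (hπ : Surjective π) (hfπ : LinearMap.range f = LinearMap.ker π)
    {r : E →ₗ[Λ] S} (hr : r ∘ₗ f = LinearMap.id) : ∃ s : N →ₗ[Λ] E, π ∘ₗ s = LinearMap.id := by
  obtain ⟨s, hs⟩ := factor_surj hπ (LinearMap.id - f ∘ₗ r) (by
    rw [← hfπ]
    rintro _ ⟨x, rfl⟩
    have := LinearMap.congr_fun hr x
    simp only [LinearMap.comp_apply, LinearMap.id_apply] at this
    simp [this])
  refine ⟨s, LinearMap.ext fun y => ?_⟩
  obtain ⟨e, rfl⟩ := hπ y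
  have h1 := LinearMap.congr_fun hs e
  simp only [LinearMap.comp_apply, LinearMap.sub_apply, LinearMap.id_apply] at h1 ⊢
  have h2 : π (f (r e)) = 0 := by
    rw [← LinearMap.mem_ker, ← hfπ]; exact ⟨_, rfl⟩
  rw [h1, map_sub, h2, sub_zero]

/-- `Ext¹(N, X)` is the cokernel of `Hom(N, I0) → Hom(N, im p)`. -/
lemma ext1_iff (N : Mdl Λ) : Ext1Zero Λ N X ↔
    ∀ φ : N →ₗ[Λ] P.I1, LinearMap.range φ ≤ LinearMap.range P.p →
      ∃ g : N →ₗ[Λ] P.I0, P.p ∘ₗ g = φ := by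
  constructor
  · intro h φ hφ
    -- pull the sequence `0 → X → I0 → im p → 0` back along `φ`
    let Q : Submodule Λ (N × P.I0) :=
      LinearMap.ker (φ ∘ₗ LinearMap.fst Λ N P.I0 - P.p ∘ₗ LinearMap.snd Λ N P.I0)
    have hQ : ∀ x : N × P.I0, x ∈ Q ↔ φ x.1 = P.p x.2 := by
      intro x
      simp [Q, sub_eq_zero]
    let f : X →ₗ[Λ] Q := (LinearMap.inr Λ N P.I0 ∘ₗ P.j).codRestrict Q (fun x => by
      simp [hQ, P.p_j])
    let π : Q →ₗ[Λ] N := LinearMap.fst Λ N P.I0 ∘ₗ Q.subtype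
    have hse : IsSESeq Λ (A := X) (E := ModuleCat.of Λ Q) (B := N) f π := by
      refine ⟨?_, ?_, ?_⟩
      · intro x y hxy
        apply P.hj
        exact congrArg (fun z : Q => z.1.2) hxy
      · intro x
        obtain ⟨y, hy⟩ := hφ ⟨x, rfl⟩
        exact ⟨⟨(x, y), (hQ _).2 hy.symm⟩, rfl⟩
      · ext ⟨⟨x, y⟩, hxy⟩
        constructor
        · rintro ⟨z, hz⟩
          have : (0 : N) = x := congrArg (fun z : Q => z.1.1) hz
          exact this.symm
        · intro hx
          have hx : x = 0 := hx
          subst hx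
          have h1 : P.p y = 0 := by simpa using ((hQ _).1 hxy).symm
          have h2 : y ∈ LinearMap.range P.j := by rw [P.hker]; exact h1
          obtain ⟨z, rfl⟩ := h2
          exact ⟨z, rfl⟩
    obtain ⟨s, hs⟩ := h (ModuleCat.of Λ Q) f π hse
    refine ⟨LinearMap.snd Λ N P.I0 ∘ₗ Q.subtype ∘ₗ s, LinearMap.ext fun x => ?_⟩
    have h1 := (hQ _).1 (s x).2
    have h2 : (s x).1.1 = x := LinearMap.congr_fun hs x
    rw [h2] at h1
    exact h1.symm
  · intro H E f π hse
    obtain ⟨r, hr⟩ := P.extend_of_lift H hse.1 hse.2.1 hse.2.2 LinearMap.id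
    exact section_of_retraction hse.2.1 hse.2.2 hr

/-- Because `I1` is an injective hull of `im p`, a map `M → I1` lifts as soon as its restriction
to the preimage of `im p` does. -/
lemma lift_of_restrict {M : Type} [AddCommGroup M] [Module Λ M] (f : M →ₗ[Λ] P.I1)
    (g₀ : (LinearMap.range P.p).comap f →ₗ[Λ] P.I0)
    (hg₀ : ∀ x, P.p (g₀ x) = f x) : ∃ g : M →ₗ[Λ] P.I0, P.p ∘ₗ g = f := by
  obtain ⟨g, hg⟩ := inj_extend P.inj0
    ((LinearMap.range P.p).comap f).injective_subtype g₀
  have hgx : ∀ x (hx : x ∈ (LinearMap.range P.p).comap f), P.p (g x) = f x := by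
    intro x hx
    rw [← hg₀ ⟨x, hx⟩, ← hg]; rfl
  have h0 : LinearMap.range (f - P.p ∘ₗ g) = ⊥ := by
    apply P.ess
    rw [eq_bot_iff]
    rintro _ ⟨⟨x, rfl⟩, y, hy⟩
    have hx : x ∈ (LinearMap.range P.p).comap f :=
      ⟨y + g x, by rw [map_add, hy]; simp⟩
    simp [hgx x hx]
  refine ⟨g, ?_⟩
  rw [LinearMap.range_eq_bot, sub_eq_zero] at h0
  exact h0.symm

/-- Membership in `(τ⁻¹X)^⊥` in terms of the minimal injective copresentation. -/
lemma mem_perp_iff {M : Mdl Λ} : M ∈ perpTauInv Λ X ↔ Module.Finite Λ M ∧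
    ∀ f : M →ₗ[Λ] P.I1, ∃ g : M →ₗ[Λ] P.I0, P.p ∘ₗ g = f := by
  constructor
  · rintro ⟨hM, h⟩
    refine ⟨hM, fun f => ?_⟩
    let S := (LinearMap.range P.p).comap f
    obtain ⟨g₀, hg₀⟩ := (P.ext1_iff _).1 (h _ (sub_mem_cogen hM S)) (f ∘ₗ S.subtype) (by
      rintro _ ⟨x, rfl⟩
      exact x.2)
    exact P.lift_of_restrict f g₀ fun x => LinearMap.congr_fun hg₀ x
  · rintro ⟨hM, h⟩
    refine ⟨hM, fun N hN => (P.ext1_iff N).2 fun φ hφ => ?_⟩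
    obtain ⟨-, Y, ⟨n, i, q, hiq⟩, e, he⟩ := hN
    have hinj : Injective (i ∘ₗ e) := (left_inv_inj hiq).comp he
    obtain ⟨ψ, hψ⟩ := inj_extend P.inj1 hinj φ
    obtain ⟨g, hg⟩ := lift_pi h ψ
    exact ⟨g ∘ₗ i ∘ₗ e, by rw [← LinearMap.comp_assoc, hg, hψ]⟩

end Copres

end Cogenerated

end Paper

/-! ### Torsion-free classes and approximations -/

namespace Paper

section Torf

set_option linter.unusedSectionVars false

variable {Λ : Type} [Ring Λ] [IsArtinianRing Λ]

lemma torf_finite {F : Set (Mdl Λ)} (hF : IsTorf Λ F) {M : Mdl Λ} (hM : M ∈ F) :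
    Module.Finite Λ M := hF.1 hM

lemma torf_sub {F : Set (Mdl Λ)} (hF : IsTorf Λ F) {M N : Mdl Λ} (hN : N ∈ F)
    (f : M →ₗ[Λ] N) (hf : Injective f) : M ∈ F := by
  have := torf_finite hF hN
  exact hF.2.2.2 M N (finite_of_inj f hf) hN ⟨f, hf⟩

lemma torf_zero {F : Set (Mdl Λ)} (hF : IsTorf Λ F) {M : Mdl Λ} (hM : IsZeroM Λ M) : M ∈ F := by
  obtain ⟨Z, hZ, -⟩ := hF.2.1
  exact torf_sub hF hZ 0 (fun x y _ => hM.elim x y)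

lemma torf_ext {F : Set (Mdl Λ)} (hF : IsTorf Λ F) {M : Mdl Λ} (hM : Module.Finite Λ M)
    (N : Submodule Λ M) (h1 : ModuleCat.of Λ N ∈ F) (h2 : ModuleCat.of Λ (M ⧸ N) ∈ F) : M ∈ F :=
  hF.2.2.1 (ModuleCat.of Λ N) M (ModuleCat.of Λ (M ⧸ N)) N.subtype N.mkQ
    ⟨N.injective_subtype, N.mkQ_surjective, by
      rw [Submodule.ker_mkQ]; exact Submodule.range_subtype N⟩ h1 h2 hM

lemma torf_submodule {F : Set (Mdl Λ)} (hF : IsTorf Λ F) {M : Mdl Λ} (hM : M ∈ F)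
    (N : Submodule Λ M) : ModuleCat.of Λ N ∈ F :=
  torf_sub hF hM N.subtype N.injective_subtype

lemma torf_pi {F : Set (Mdl Λ)} (hF : IsTorf Λ F) {X : Mdl Λ} (hX : X ∈ F) (n : ℕ) :
    ModuleCat.of Λ (Fin n → X) ∈ F := by
  have hfin := torf_finite hF hX
  induction n with
  | zero => exact torf_zero hF (inferInstanceAs (Subsingleton (Fin 0 → X)))
  | succ n ih =>
    let f : (Fin n → X) →ₗ[Λ] (Fin (n + 1) → X) :=
      LinearMap.pi (Fin.cons 0 fun i => LinearMap.proj i)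
    refine hF.2.2.1 (ModuleCat.of Λ (Fin n → X)) (ModuleCat.of Λ (Fin (n + 1) → X)) X f
      (LinearMap.proj 0) ⟨?_, ?_, ?_⟩ ih hX (inferInstanceAs (Module.Finite Λ (Fin (n + 1) → X)))
    · intro x y h
      funext i
      exact congrFun h i.succ
    · exact fun x => ⟨fun _ => x, rfl⟩
    · ext x
      constructor
      · rintro ⟨y, rfl⟩
        rfl
      · intro hx
        refine ⟨fun i => x i.succ, funext fun i => ?_⟩
        refine Fin.cases ?_ (fun i => rfl) i
        exact Eq.symm hx

lemma cogen_subset_torf {F : Set (Mdl Λ)} (hF : IsTorf Λ F) {X : Mdl Λ} (hX : X ∈ F) :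
    Cogen Λ X ⊆ F := by
  intro M hM
  obtain ⟨n, e, he⟩ := cogen_embed hM
  exact torf_sub hF (torf_pi hF hX n) e he

/-- Every finitely generated module has a torsion submodule with respect to a torsion-free
class. -/
lemma torf_radical {F : Set (Mdl Λ)} (hF : IsTorf Λ F) (M : Mdl Λ) (hM : Module.Finite Λ M) :
    ∃ N : Submodule Λ M, ModuleCat.of Λ (M ⧸ N) ∈ F ∧
      ∀ Y ∈ F, ∀ f : N →ₗ[Λ] Y, f = 0 := by
  let S : Set (Submodule Λ M) := {N | ModuleCat.of Λ (M ⧸ N) ∈ F}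
  obtain ⟨N, hN, hmin⟩ := wellFounded_lt.has_min S
    ⟨⊤, torf_zero hF (inferInstanceAs (Subsingleton (M ⧸ (⊤ : Submodule Λ M))))⟩
  refine ⟨N, hN, fun Y hY f => ?_⟩
  -- the kernel of `f` is again a submodule with torsion-free quotient
  let L : Submodule Λ M := (LinearMap.ker f).map N.subtype
  have hLN : L ≤ N := Submodule.map_subtype_le _ _
  have hL : L ∈ S := by
    have hq : L ≤ LinearMap.ker N.mkQ := by rwa [Submodule.ker_mkQ]
    let π : (M ⧸ L) →ₗ[Λ] (M ⧸ N) := L.liftQ N.mkQ hq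
    have hfin : Module.Finite Λ (M ⧸ L) := inferInstance
    refine torf_ext hF (M := ModuleCat.of Λ (M ⧸ L)) hfin (LinearMap.ker π) ?_ ?_
    · -- the kernel is `N / L`, which embeds in `Y`
      obtain ⟨g, hg⟩ := factor_surj (g := (L.mkQ ∘ₗ N.subtype).codRestrict (LinearMap.ker π)
        (fun x => by simp [π])) (by
          rintro ⟨y, hy⟩
          obtain ⟨x, rfl⟩ := L.mkQ_surjective y
          have hx : x ∈ N := by simpa [π] using hy
          exact ⟨⟨x, hx⟩, rfl⟩) f (by
          intro x hx
          have hx' : x.1 ∈ L := (Submodule.Quotient.mk_eq_zero L).1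
            (congrArg Subtype.val (LinearMap.mem_ker.1 hx))
          obtain ⟨z, hz, hzx⟩ := hx'
          have : z = x := Subtype.ext hzx
          exact this ▸ hz)
      refine torf_sub hF hY g ?_
      rw [← LinearMap.ker_eq_bot, LinearMap.ker_eq_bot']
      rintro ⟨y, hy⟩ h0
      obtain ⟨x, rfl⟩ := L.mkQ_surjective y
      have hx : x ∈ N := by simpa [π] using hy
      have h1 := LinearMap.congr_fun hg ⟨x, hx⟩
      have h2 : f ⟨x, hx⟩ = 0 := h1.symm.trans h0
      apply Subtype.ext
      exact (Submodule.Quotient.mk_eq_zero L).2 ⟨⟨x, hx⟩, h2, rfl⟩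
    · have hsurj : Surjective π := by
        intro y
        obtain ⟨x, rfl⟩ := N.mkQ_surjective y
        exact ⟨L.mkQ x, by simp [π]⟩
      exact torf_sub hF hN (π.quotKerEquivOfSurjective hsurj).toLinearMap
        (π.quotKerEquivOfSurjective hsurj).injective
  have hLeq : L = N := by
    by_contra hne
    exact hmin L hL (lt_of_le_of_ne hLN hne)
  ext x
  have hx : x.1 ∈ L := by rw [hLeq]; exact x.2
  obtain ⟨z, hz, hzx⟩ := hx
  have : z = x := Subtype.ext hzx
  exact this ▸ hz

/-- The torsion-free quotient of `M` is a left approximation of `M`. -/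
lemma torf_contraFin {F : Set (Mdl Λ)} (hF : IsTorf Λ F) : ContraFin Λ F := by
  intro M hM
  obtain ⟨N, hN, h0⟩ := torf_radical hF M hM
  refine ⟨_, hN, N.mkQ, fun Y hY f => ?_⟩
  refine factor_surj N.mkQ_surjective f ?_
  rw [Submodule.ker_mkQ]
  intro x hx
  exact LinearMap.congr_fun (h0 Y hY (f ∘ₗ N.subtype)) ⟨x, hx⟩

/-- Closure under extensions: by rigidity, maps to `X` extend from the subobject to the middle term. -/
lemma cogen_torf {X : Mdl Λ} (P : Copres X) (hX : TauInvRigid Λ X) : IsTorf Λ (Cogen Λ X) := by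
  refine ⟨fun M hM => hM.1, ⟨ModuleCat.of Λ PUnit, ?_, ?_⟩, ?_, ?_⟩
  · exact mem_cogen.2 ⟨inferInstanceAs (Module.Finite Λ PUnit), fun m hm => (hm rfl).elim⟩
  · exact inferInstanceAs (Subsingleton PUnit)
  · intro A E B f g hse hA hB hE
    refine mem_cogen.2 ⟨hE, fun m hm => ?_⟩
    by_cases hg : g m = 0
    · have : m ∈ LinearMap.range f := by rw [hse.2.2]; exact hg
      obtain ⟨a, rfl⟩ := this
      obtain ⟨s, hs⟩ := (mem_cogen.1 hA).2 a (fun h => hm (by rw [h, map_zero]))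
      obtain ⟨k, rfl⟩ := P.extend_of_lift ((P.ext1_iff B).1 (hX.2 B hB)) hse.1 hse.2.1 hse.2.2 s
      exact ⟨k, hs⟩
    · obtain ⟨s, hs⟩ := (mem_cogen.1 hB).2 _ hg
      exact ⟨s ∘ₗ g, hs⟩
  · rintro M N - hN ⟨f, hf⟩
    exact cogen_of_sub hN f hf

/-- Closure under extensions and submodules via lifting of maps along `I0 → I1`. -/
lemma perp_torf {X : Mdl Λ} (P : Copres X) : IsTorf Λ (perpTauInv Λ X) := by
  refine ⟨fun M hM => hM.1, ⟨ModuleCat.of Λ PUnit, ?_, ?_⟩, ?_, ?_⟩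
  · refine P.mem_perp_iff.2 ⟨inferInstanceAs (Module.Finite Λ PUnit), fun f => ⟨0, ?_⟩⟩
    ext x
    have : x = 0 := rfl
    simp [this]
  · exact inferInstanceAs (Subsingleton PUnit)
  · intro A E B f g hse hA hB hE
    refine P.mem_perp_iff.2 ⟨hE, fun φ => ?_⟩
    obtain ⟨a, ha⟩ := (P.mem_perp_iff.1 hA).2 (φ ∘ₗ f)
    obtain ⟨k, hk⟩ := inj_extend P.inj0 hse.1 a
    obtain ⟨ψ, hψ⟩ := factor_surj hse.2.1 (φ - P.p ∘ₗ k) (by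
      rw [← hse.2.2]
      rintro _ ⟨x, rfl⟩
      have h1 := LinearMap.congr_fun hk x
      have h2 := LinearMap.congr_fun ha x
      simp only [LinearMap.comp_apply] at h1 h2
      simp [h1, h2])
    obtain ⟨b, hb⟩ := (P.mem_perp_iff.1 hB).2 ψ
    refine ⟨k + b ∘ₗ g, ?_⟩
    rw [LinearMap.comp_add, ← LinearMap.comp_assoc, hb, hψ]
    abel
  · rintro M N hM hN ⟨f, hf⟩
    refine P.mem_perp_iff.2 ⟨hM, fun φ => ?_⟩
    obtain ⟨ψ, hψ⟩ := inj_extend P.inj1 hf φ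
    obtain ⟨k, hk⟩ := (P.mem_perp_iff.1 hN).2 ψ
    exact ⟨k ∘ₗ f, by rw [← LinearMap.comp_assoc, hk, hψ]⟩

lemma cogen_subset_perp {X : Mdl Λ} (hX : TauInvRigid Λ X) : Cogen Λ X ⊆ perpTauInv Λ X :=
  fun _ hM => ⟨hM.1, fun N hN => hX.2 N (cogen_trans hM hN)⟩

/-- The quotient of an object of `(τ⁻¹X)^⊥` by a submodule in `⊥X` stays in `(τ⁻¹X)^⊥`. -/
lemma perp_quotient {X : Mdl Λ} (P : Copres X) {M : Mdl Λ} (hM : M ∈ perpTauInv Λ X)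
    (A : Submodule Λ M) (hA : ∀ f : A →ₗ[Λ] X, f = 0) :
    ModuleCat.of Λ (M ⧸ A) ∈ perpTauInv Λ X := by
  have hfin := hM.1
  refine P.mem_perp_iff.2 ⟨inferInstanceAs (Module.Finite Λ (M ⧸ A)), fun φ => ?_⟩
  obtain ⟨g, hg⟩ := (P.mem_perp_iff.1 hM).2 (φ ∘ₗ A.mkQ)
  obtain ⟨h, hh⟩ := P.factor_X (g ∘ₗ A.subtype) (fun x => by
    have := LinearMap.congr_fun hg x.1
    simp only [LinearMap.comp_apply] at this
    simp only [LinearMap.comp_apply, Submodule.subtype_apply, this]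
    simp [(Submodule.Quotient.mk_eq_zero A).2 x.2])
  obtain ⟨k, hk⟩ := factor_surj A.mkQ_surjective g (by
    rw [Submodule.ker_mkQ]
    intro x hx
    have := LinearMap.congr_fun hh ⟨x, hx⟩
    rw [hA h] at this
    simpa using this.symm)
  refine ⟨k, LinearMap.ext fun y => ?_⟩
  obtain ⟨x, rfl⟩ := A.mkQ_surjective y
  have h1 := LinearMap.congr_fun hg x
  have h2 := LinearMap.congr_fun hk x
  simp only [LinearMap.comp_apply] at h1 h2 ⊢
  rw [h2, h1]

/-- `Cogen X` is covariantly finite: a right approximation of `M` is the pullback of a right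
`add X`-approximation of an injective module containing `M`. -/
lemma cogen_covFin (K : Type) [Field K] [Algebra K Λ] [FiniteDimensional K Λ]
    (X : Mdl Λ) (hX : Module.Finite Λ X) : CovFin Λ (Cogen Λ X) := by
  intro M hM
  have hM : Module.Finite Λ M := hM
  obtain ⟨I, hI, hIi, c, hc⟩ := exists_inj_embedding K M hM
  obtain ⟨r, u, hu⟩ := right_add_approx K (Λ := Λ) I X
  let Q : Submodule Λ ((Fin r → X) × M) :=
    LinearMap.ker (u ∘ₗ LinearMap.fst Λ _ _ - c ∘ₗ LinearMap.snd Λ _ _)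
  have hQ : ∀ x : (Fin r → X) × M, x ∈ Q ↔ u x.1 = c x.2 := by
    intro x
    simp [Q, sub_eq_zero]
  refine ⟨ModuleCat.of Λ Q, mem_cogen.2 ⟨inferInstanceAs (Module.Finite Λ Q), ?_⟩,
    LinearMap.snd Λ _ _ ∘ₗ Q.subtype, ?_⟩
  · intro ⟨⟨a, m⟩, hx⟩ h0
    by_contra! hcon
    apply h0
    have ha : a = 0 := funext fun k =>
      hcon (LinearMap.proj k ∘ₗ LinearMap.fst Λ _ _ ∘ₗ Q.subtype)
    subst ha
    have hm : c m = 0 := by simpa using ((hQ _).1 hx).symm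
    have hm : m = 0 := hc (by rw [hm, map_zero])
    subst hm
    rfl
  · intro C hC f
    obtain ⟨n, e, he⟩ := cogen_embed hC
    obtain ⟨w, hw⟩ := inj_extend hIi he (c ∘ₗ f)
    obtain ⟨θ, hθ⟩ := lift_pi hu w
    refine ⟨((θ ∘ₗ e).prod f).codRestrict Q (fun x => ?_), ?_⟩
    · rw [hQ]
      have h1 := LinearMap.congr_fun hw x
      have h2 := LinearMap.congr_fun hθ (e x)
      simp only [LinearMap.comp_apply] at h1 h2
      simp [h2, h1]
    · ext x
      rfl

/-- `(τ⁻¹X)^⊥` is covariantly finite. The right approximation of `M` is a Bongartz-type universal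
construction: pull the `r`-th power of `I0 → I1` back along a map `M → I1^r` whose components span
`Hom(M, I1)`. -/
lemma perp_covFin (K : Type) [Field K] [Algebra K Λ] [FiniteDimensional K Λ]
    {X : Mdl Λ} (P : Copres X) (hX : TauInvRigid Λ X) :
    CovFin Λ (perpTauInv Λ X) := by
  intro M hM
  have hM : Module.Finite Λ M := hM
  have := P.fin0
  have := P.fin1
  obtain ⟨r, u, hu⟩ := hom_span K (Λ := Λ) M P.I1
  let Q : Submodule Λ (M × (Fin r → P.I0)) :=
    LinearMap.ker (LinearMap.pi u ∘ₗ LinearMap.fst Λ _ _ -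
      LinearMap.pi (fun k => P.p ∘ₗ LinearMap.proj k) ∘ₗ LinearMap.snd Λ _ _)
  have hQ : ∀ x : M × (Fin r → P.I0), x ∈ Q ↔ ∀ k, u k x.1 = P.p (x.2 k) := by
    intro x
    simp [Q, sub_eq_zero, funext_iff]
  let π : Q →ₗ[Λ] M := LinearMap.fst Λ _ _ ∘ₗ Q.subtype
  let ρ : Fin r → Q →ₗ[Λ] P.I0 := fun k => LinearMap.proj k ∘ₗ LinearMap.snd Λ _ _ ∘ₗ Q.subtype
  have hρ : ∀ k x, u k (π x) = P.p (ρ k x) := fun k x => (hQ _).1 x.2 k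
  -- maps to `I1` that factor through `M` lift
  have L1 : ∀ a : M →ₗ[Λ] P.I1, ∃ g : Q →ₗ[Λ] P.I0, P.p ∘ₗ g = a ∘ₗ π := by
    intro a
    obtain ⟨c, rfl⟩ := hu a
    refine ⟨∑ k, scal K (c k) P.I0 ∘ₗ ρ k, LinearMap.ext fun x => ?_⟩
    simp only [LinearMap.comp_apply, LinearMap.sum_apply, map_sum, map_scal, hρ]
  -- rigidity of `X` handles the maps that factor through `I0`
  have L2 : ∀ (k : Fin r) (b : P.I0 →ₗ[Λ] P.I1), ∃ g : Q →ₗ[Λ] P.I0,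
      P.p ∘ₗ g = b ∘ₗ ρ k := by
    intro k b
    obtain ⟨g₀, hg₀⟩ := (P.mem_perp_iff.1
      (cogen_subset_perp hX (self_mem_cogen X hX.1))).2 (b ∘ₗ P.j)
    obtain ⟨g, hg⟩ := inj_extend P.inj0 P.hj g₀
    obtain ⟨h₀, hh₀⟩ := factor_surj P.p.surjective_rangeRestrict (b - P.p ∘ₗ g) (by
      rw [LinearMap.ker_rangeRestrict, ← P.hker]
      rintro _ ⟨x, rfl⟩
      have h1 := LinearMap.congr_fun hg x
      have h2 := LinearMap.congr_fun hg₀ x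
      simp only [LinearMap.comp_apply] at h1 h2
      simp [h1, h2])
    obtain ⟨h, hh⟩ := inj_extend P.inj1 (LinearMap.range P.p).injective_subtype h₀
    obtain ⟨g₁, hg₁⟩ := L1 (h ∘ₗ u k)
    refine ⟨g ∘ₗ ρ k + g₁, LinearMap.ext fun x => ?_⟩
    have h1 := LinearMap.congr_fun hg₁ x
    have h2 : h (P.p (ρ k x)) = h₀ (P.p.rangeRestrict (ρ k x)) :=
      LinearMap.congr_fun hh (P.p.rangeRestrict (ρ k x))
    have h3 := LinearMap.congr_fun hh₀ (ρ k x)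
    simp only [LinearMap.comp_apply, LinearMap.sub_apply, LinearMap.add_apply, map_add] at h1 h3 ⊢
    rw [h1, hρ, h2, h3]
    abel
  refine ⟨ModuleCat.of Λ Q, P.mem_perp_iff.2 ⟨inferInstanceAs (Module.Finite Λ Q), ?_⟩, π, ?_⟩
  · intro φ
    obtain ⟨Φ, hΦ⟩ := inj_extend P.inj1 Q.injective_subtype φ
    obtain ⟨g₁, hg₁⟩ := L1 (Φ ∘ₗ LinearMap.inl Λ _ _)
    choose g hg using fun k => L2 k
      (Φ ∘ₗ LinearMap.inr Λ _ _ ∘ₗ LinearMap.single Λ (fun _ => (P.I0 : Type)) k)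
    refine ⟨g₁ + ∑ k, g k, LinearMap.ext fun x => ?_⟩
    have h1 : P.p (g₁ x) = Φ (π x, 0) := LinearMap.congr_fun hg₁ x
    have h2 : ∀ k, P.p (g k x) = Φ (0, Pi.single k (ρ k x)) :=
      fun k => LinearMap.congr_fun (hg k) x
    have h3 : φ x = Φ x.1 := (LinearMap.congr_fun hΦ x).symm
    have h4 : x.1 = (π x, 0) + ∑ k, ((0 : M), Pi.single k (ρ k x)) := by
      refine Prod.ext ?_ ?_
      · simp [Prod.fst_sum, π]
      · simp only [Prod.snd_add, Prod.snd_sum, zero_add]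
        exact (Finset.univ_sum_single x.1.2).symm
    rw [h3, h4, map_add, map_sum]
    simp [LinearMap.sum_apply, h1, h2]
  · intro C hC f
    choose g hg using fun k => (P.mem_perp_iff.1 hC).2 (u k ∘ₗ f)
    refine ⟨(f.prod (LinearMap.pi g)).codRestrict Q (fun x => ?_), ?_⟩
    · rw [hQ]
      intro k
      exact (LinearMap.congr_fun (hg k) x).symm
    · ext x
      rfl

end Torf

end Paper

/-! ### Direct summands and indecomposable modules -/

namespace Paper

section KrullSchmidt

set_option linter.unusedSectionVars false

variable {Λ : Type} [Ring Λ] [IsArtinianRing Λ]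

lemma IsSummand.refl (M : Mdl Λ) : IsSummand Λ M M := ⟨LinearMap.id, LinearMap.id, rfl⟩

lemma IsSummand.trans {A B C : Mdl Λ} (h : IsSummand Λ A B) (h' : IsSummand Λ B C) :
    IsSummand Λ A C := by
  obtain ⟨i, p, hip⟩ := h
  obtain ⟨i', p', hip'⟩ := h'
  refine ⟨i' ∘ₗ i, p ∘ₗ p', LinearMap.ext fun x => ?_⟩
  have h1 := LinearMap.congr_fun hip' (i x)
  have h2 := LinearMap.congr_fun hip x
  simp only [LinearMap.comp_apply, LinearMap.id_apply] at h1 h2 ⊢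
  rw [h1, h2]

lemma IsoM.summand {A B : Mdl Λ} (h : IsoM Λ A B) : IsSummand Λ A B := by
  obtain ⟨e⟩ := h
  exact ⟨e.toLinearMap, e.symm.toLinearMap, by ext; simp⟩

lemma IsoM.symm {A B : Mdl Λ} (h : IsoM Λ A B) : IsoM Λ B A := ⟨h.some.symm⟩

lemma IsoM.trans {A B C : Mdl Λ} (h : IsoM Λ A B) (h' : IsoM Λ B C) : IsoM Λ A C :=
  ⟨h.some.trans h'.some⟩

lemma dsum_congr {A B A' B' : Mdl Λ} (h : IsoM Λ A A') (h' : IsoM Λ B B') :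
    IsoM Λ (dsum Λ A B) (dsum Λ A' B') := ⟨h.some.prodCongr h'.some⟩

lemma dsum_assoc (A B C : Mdl Λ) : IsoM Λ (dsum Λ (dsum Λ A B) C) (dsum Λ A (dsum Λ B C)) :=
  ⟨LinearEquiv.prodAssoc Λ A B C⟩

lemma dsum_comm (A B : Mdl Λ) : IsoM Λ (dsum Λ A B) (dsum Λ B A) :=
  ⟨LinearEquiv.prodComm Λ A B⟩

lemma summand_left (A B : Mdl Λ) : IsSummand Λ A (dsum Λ A B) :=
  ⟨LinearMap.inl Λ A B, LinearMap.fst Λ A B, rfl⟩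

lemma summand_right (A B : Mdl Λ) : IsSummand Λ B (dsum Λ A B) :=
  ⟨LinearMap.inr Λ A B, LinearMap.snd Λ A B, rfl⟩

/-- A split monomorphism has a complement, namely the kernel of the retraction. -/
def splitEquiv {A M : Type} [AddCommGroup A] [Module Λ A] [AddCommGroup M] [Module Λ M]
    (i : A →ₗ[Λ] M) (p : M →ₗ[Λ] A) (h : p ∘ₗ i = LinearMap.id) :
    M ≃ₗ[Λ] (A × LinearMap.ker p) :=
  have hx : ∀ x, p (i x) = x := LinearMap.congr_fun h
  LinearEquiv.ofLinearMap
    (p.prod ((LinearMap.id - i ∘ₗ p).codRestrict (LinearMap.ker p) (fun x => by simp [hx])))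
    (i.coprod (LinearMap.ker p).subtype)
    (by
      refine LinearMap.ext fun ⟨a, k, hk⟩ => ?_
      have hk : p k = 0 := hk
      refine Prod.ext ?_ (Subtype.ext ?_)
      · simp [hx, hk]
      · simp [hx, hk])
    (by
      refine LinearMap.ext fun m => ?_
      simp)

lemma split_iso {A M : Mdl Λ} {i : A →ₗ[Λ] M} {p : M →ₗ[Λ] A} (h : p ∘ₗ i = LinearMap.id) :
    IsoM Λ M (dsum Λ A (ModuleCat.of Λ (LinearMap.ker p))) := ⟨splitEquiv i p h⟩

lemma IsSummand.compl {A M : Mdl Λ} (h : IsSummand Λ A M) : ∃ B, IsoM Λ M (dsum Λ A B) := by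
  obtain ⟨i, p, hip⟩ := h
  exact ⟨_, split_iso hip⟩

lemma IsSummand.dsum_left {A B : Mdl Λ} (h : IsSummand Λ A B) (C : Mdl Λ) :
    IsSummand Λ (dsum Λ A C) (dsum Λ B C) := by
  obtain ⟨i, p, hip⟩ := h
  exact ⟨i.prodMap LinearMap.id, p.prodMap LinearMap.id,
    (LinearMap.prodMap_comp ..).trans (by rw [hip]; exact LinearMap.prodMap_id)⟩

lemma IsSummand.finite {A B : Mdl Λ} (h : IsSummand Λ A B) (hB : Module.Finite Λ B) :
    Module.Finite Λ A := by
  obtain ⟨i, p, hip⟩ := h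
  exact finite_of_inj i (left_inv_inj hip)

lemma dsum_finite {A B : Mdl Λ} (hA : Module.Finite Λ A) (hB : Module.Finite Λ B) :
    Module.Finite Λ (dsum Λ A B) := inferInstanceAs (Module.Finite Λ (A × B))

lemma length_iso {A B : Mdl Λ} (h : IsoM Λ A B) : Module.length Λ A = Module.length Λ B :=
  h.some.length_eq

lemma length_dsum (A B : Mdl Λ) :
    Module.length Λ (dsum Λ A B) = Module.length Λ A + Module.length Λ B :=
  Module.length_prod ..

lemma length_lt_of_dsum {M A B : Mdl Λ} (hM : Module.Finite Λ M) (h : IsoM Λ M (dsum Λ A B))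
    (hB : ¬ IsZeroM Λ B) : Module.length Λ A < Module.length Λ M := by
  have hA : Module.Finite Λ A := ((summand_left A B).trans h.symm.summand).finite hM
  rw [length_iso h, length_dsum]
  have h1 : Module.length Λ A ≠ ⊤ := Module.length_ne_top
  have h2 : Module.length Λ B ≠ 0 := fun h => hB (Module.length_eq_zero_iff.1 h)
  rw [add_comm]
  exact ENat.lt_add_left h1 (pos_iff_ne_zero.2 h2)

/-- Fitting's lemma: endomorphisms of an indecomposable module are nilpotent or invertible. -/
lemma indec_end {V : Mdl Λ} (hV : Module.Finite Λ V) (hi : Indec Λ V) (f : Module.End Λ V) :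
    IsNilpotent f ∨ IsUnit f := by
  obtain ⟨n, hn0, c, hid, hker⟩ := fitting f
  set e := c * f ^ n
  have hret : e.rangeRestrict ∘ₗ (LinearMap.range e).subtype = LinearMap.id := by
    ext ⟨_, z, rfl⟩
    exact LinearMap.congr_fun hid z
  rcases hi.2 (ModuleCat.of Λ (LinearMap.range e)) _
    (split_iso (A := ModuleCat.of Λ (LinearMap.range e)) hret) with h | h
  · left
    refine ⟨n, LinearMap.ext fun x => ?_⟩
    have hx : x ∈ LinearMap.ker e := by
      have := h.elim (⟨e x, x, rfl⟩ : LinearMap.range e) 0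
      exact congrArg Subtype.val this
    rw [hker] at hx
    exact hx
  · right
    rw [Module.End.isUnit_iff]
    apply IsArtinian.bijective_of_injective_endomorphism
    rw [← LinearMap.ker_eq_bot, LinearMap.ker_eq_bot']
    intro x hx
    obtain ⟨k, rfl⟩ := Nat.exists_eq_succ_of_ne_zero hn0
    have h1 : x ∈ LinearMap.ker e := by
      rw [hker, LinearMap.mem_ker, Nat.succ_eq_add_one, pow_succ, Module.End.mul_apply, hx,
        map_zero]
    have h2 : x ∈ LinearMap.ker e.rangeRestrict := by rwa [LinearMap.ker_rangeRestrict]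
    exact congrArg Subtype.val (h.elim (⟨x, h2⟩ : LinearMap.ker e.rangeRestrict) 0)

/-- The endomorphism ring of an indecomposable module is local. -/
lemma indec_sum {V : Mdl Λ} (hV : Module.Finite Λ V) (hi : Indec Λ V) {n : ℕ}
    (f : Fin n → Module.End Λ V) (h : IsUnit (∑ k, f k)) : ∃ k, IsUnit (f k) := by
  induction n with
  | zero =>
    exfalso
    rw [Fin.sum_univ_zero, isUnit_zero_iff] at h
    apply hi.1
    refine ⟨fun x y => ?_⟩
    have h1 := LinearMap.congr_fun h x
    have h2 := LinearMap.congr_fun h y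
    simp only [LinearMap.zero_apply, Module.End.one_apply] at h1 h2
    rw [← h1, ← h2]
  | succ n ih =>
    rw [Fin.sum_univ_succ] at h
    by_cases h0 : IsUnit (f 0)
    · exact ⟨0, h0⟩
    obtain ⟨u, hu⟩ := h
    have hnil : IsNilpotent ((↑u⁻¹ : Module.End Λ V) * f 0) := by
      refine (indec_end hV hi _).resolve_right fun hunit => h0 ?_
      have := u.isUnit.mul hunit
      rwa [← mul_assoc, Units.mul_inv, one_mul] at this
    have h1 : (↑u⁻¹ : Module.End Λ V) * (∑ k : Fin n, f k.succ) = 1 - ↑u⁻¹ * f 0 := by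
      rw [eq_sub_iff_add_eq, ← mul_add, add_comm, ← hu, Units.inv_mul]
    have h2 : IsUnit (∑ k : Fin n, f k.succ) := by
      have := u.isUnit.mul (h1 ▸ hnil.isUnit_one_sub)
      rwa [← mul_assoc, Units.mul_inv, one_mul] at this
    obtain ⟨k, hk⟩ := ih (fun k => f k.succ) h2
    exact ⟨k.succ, hk⟩

lemma summand_of_unit {V Y : Mdl Λ} {i : V →ₗ[Λ] Y} {p : Y →ₗ[Λ] V}
    (h : IsUnit (p ∘ₗ i : Module.End Λ V)) : IsSummand Λ V Y := by
  obtain ⟨u, hu⟩ := h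
  refine ⟨i, (↑u⁻¹ : Module.End Λ V) ∘ₗ p, ?_⟩
  rw [LinearMap.comp_assoc, ← hu]
  exact u.inv_mul

/-- An indecomposable summand of a finite power is a summand of the factor, because its endomorphism
ring is local. -/
lemma indec_summand_pi {V Y : Mdl Λ} (hV : Module.Finite Λ V) (hi : Indec Λ V)
    (h : V ∈ addOf Λ Y) : IsSummand Λ V Y := by
  obtain ⟨n, i, p, hip⟩ := h
  obtain ⟨k, hk⟩ := indec_sum hV hi
    (fun k : Fin n => (p ∘ₗ LinearMap.single Λ (fun _ => (Y : Type)) k) ∘ₗ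
      (LinearMap.proj k ∘ₗ i)) (by
    convert isUnit_one
    refine LinearMap.ext fun x => ?_
    have h1 : p (i x) = x := LinearMap.congr_fun hip x
    simp only [LinearMap.sum_apply, LinearMap.comp_apply, Module.End.one_apply]
    rw [← map_sum]
    conv_rhs => rw [← h1]
    congr 1
    exact Finset.univ_sum_single (i x))
  exact summand_of_unit hk

/-- Exchange: an indecomposable summand of `A ⊕ B` is a summand of `A` or of `B`. -/
lemma indec_summand_dsum {V A B : Mdl Λ} (hV : Module.Finite Λ V) (hi : Indec Λ V)
    (h : IsSummand Λ V (dsum Λ A B)) : IsSummand Λ V A ∨ IsSummand Λ V B := by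
  obtain ⟨i, p, hip⟩ := h
  let q : (A × B) →ₗ[Λ] V := p
  let s : V →ₗ[Λ] (A × B) := i
  obtain ⟨k, hk⟩ := indec_sum hV hi
    ![(q ∘ₗ LinearMap.inl Λ A B) ∘ₗ (LinearMap.fst Λ A B ∘ₗ s),
      (q ∘ₗ LinearMap.inr Λ A B) ∘ₗ (LinearMap.snd Λ A B ∘ₗ s)] (by
    convert isUnit_one
    refine LinearMap.ext fun x => ?_
    have h1 : q (s x) = x := LinearMap.congr_fun hip x
    simp only [Fin.sum_univ_two, Matrix.cons_val_zero, Matrix.cons_val_one, LinearMap.add_apply,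
      LinearMap.comp_apply, Module.End.one_apply]
    rw [← map_add]
    conv_rhs => rw [← h1]
    congr 1
    simp)
  revert hk
  refine Fin.cases (fun hk => ?_) (fun k hk => ?_) k
  · exact Or.inl (summand_of_unit hk)
  · have hk0 : k = 0 := Subsingleton.elim _ _
    subst hk0
    exact Or.inr (summand_of_unit hk)

lemma indec_summand_indec {V Y : Mdl Λ} (hV : ¬ IsZeroM Λ V) (hY : Indec Λ Y)
    (h : IsSummand Λ V Y) : IsoM Λ V Y := by
  obtain ⟨B, hB⟩ := h.compl
  have hB0 := (hY.2 _ _ hB).resolve_left hV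
  have : Subsingleton B := hB0
  have : Unique B := ⟨⟨0⟩, fun x => Subsingleton.elim _ _⟩
  exact ⟨(hB.some.trans (LinearEquiv.prodUnique : (V × B) ≃ₗ[Λ] V)).symm⟩

lemma indec_add_indec {V Y : Mdl Λ} (hV : Module.Finite Λ V) (hi : Indec Λ V) (hY : Indec Λ Y)
    (h : V ∈ addOf Λ Y) : IsoM Λ V Y :=
  indec_summand_indec hi.1 hY (indec_summand_pi hV hi h)

lemma summand_add {V Y : Mdl Λ} (h : IsSummand Λ V Y) : V ∈ addOf Λ Y :=
  ⟨1, h.trans (IsoM.summand ⟨(LinearEquiv.funUnique (Fin 1) Λ Y).symm⟩)⟩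

lemma exists_indec_aux (ℓ : ℕ∞) : ∀ M : Mdl Λ, Module.length Λ M = ℓ → Module.Finite Λ M →
    ¬ IsZeroM Λ M → ∃ V, Indec Λ V ∧ IsSummand Λ V M := by
  induction ℓ using WellFoundedLT.induction with
  | ind ℓ ih =>
  intro M hℓ hM h0
  by_cases hi : Indec Λ M
  · exact ⟨M, hi, IsSummand.refl M⟩
  · have : ∃ A B : Mdl Λ, IsoM Λ M (dsum Λ A B) ∧ ¬ IsZeroM Λ A ∧ ¬ IsZeroM Λ B := by
      by_contra! hcon
      exact hi ⟨h0, fun A B h => or_iff_not_imp_left.2 (hcon A B h)⟩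
    obtain ⟨A, B, h, hA, hB⟩ := this
    have hAM := (summand_left A B).trans h.symm.summand
    obtain ⟨V, hV, hVA⟩ := ih _ (hℓ ▸ length_lt_of_dsum hM h hB) A rfl (hAM.finite hM) hA
    exact ⟨V, hV, hVA.trans hAM⟩

lemma exists_indec {M : Mdl Λ} (hM : Module.Finite Λ M) (h0 : ¬ IsZeroM Λ M) :
    ∃ V, Indec Λ V ∧ IsSummand Λ V M := exists_indec_aux _ M rfl hM h0

lemma cogen_dsum {A B W : Mdl Λ} (hA : A ∈ Cogen Λ W) (hB : B ∈ Cogen Λ W) :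
    dsum Λ A B ∈ Cogen Λ W := by
  refine mem_cogen.2 ⟨dsum_finite hA.1 hB.1, ?_⟩
  rintro ⟨a, b⟩ hab
  by_cases ha : a = 0
  · have hb : b ≠ 0 := fun hb => hab (by rw [ha, hb]; rfl)
    obtain ⟨f, hf⟩ := (mem_cogen.1 hB).2 b hb
    exact ⟨f ∘ₗ LinearMap.snd Λ A B, hf⟩
  · obtain ⟨f, hf⟩ := (mem_cogen.1 hA).2 a ha
    exact ⟨f ∘ₗ LinearMap.fst Λ A B, hf⟩

lemma cogen_iso {A B W : Mdl Λ} (h : IsoM Λ A B) (hB : B ∈ Cogen Λ W) : A ∈ Cogen Λ W :=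
  cogen_of_sub hB h.some.toLinearMap h.some.injective

lemma cogen_summand {A B W : Mdl Λ} (h : IsSummand Λ A B) (hB : B ∈ Cogen Λ W) :
    A ∈ Cogen Λ W := by
  obtain ⟨i, p, hip⟩ := h
  exact cogen_of_sub hB i (left_inv_inj hip)

lemma add_mem_cogen {V Y W : Mdl Λ} (hV : Module.Finite Λ V) (h : V ∈ addOf Λ Y)
    (hY : Y ∈ Cogen Λ W) : V ∈ Cogen Λ W :=
  cogen_trans hY ⟨hV, V, h, LinearMap.id, injective_id⟩

/-- Membership in `Cogen W` can be tested on indecomposable summands. -/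
lemma cogen_of_indec {W : Mdl Λ} (ℓ : ℕ∞) : ∀ Z : Mdl Λ, Module.length Λ Z = ℓ →
    Module.Finite Λ Z → (∀ V, Indec Λ V → IsSummand Λ V Z → V ∈ Cogen Λ W) → Z ∈ Cogen Λ W := by
  induction ℓ using WellFoundedLT.induction with
  | ind ℓ ih =>
  intro Z hℓ hZ H
  by_cases h0 : IsZeroM Λ Z
  · exact mem_cogen.2 ⟨hZ, fun m hm => (hm (h0.elim m 0)).elim⟩
  obtain ⟨V, hV, hVZ⟩ := exists_indec hZ h0
  obtain ⟨B, hB⟩ := hVZ.compl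
  have hBZ := (summand_right V B).trans hB.symm.summand
  refine cogen_iso hB (cogen_dsum (H V hV hVZ) ?_)
  exact ih _ (hℓ ▸ length_lt_of_dsum hZ (hB.trans (dsum_comm V B)) hV.1) B rfl (hBZ.finite hZ)
    fun V' h' hs => H V' h' (hs.trans hBZ)

end KrullSchmidt

end Paper

/-! ### Split injective objects and the endomorphism ring -/

namespace Paper

section SplitInjective

set_option linter.unusedSectionVars false

variable {Λ : Type} [Ring Λ] [IsArtinianRing Λ]

/-- A left ideal consisting of nilpotent elements lies in the Jacobson radical. -/
lemma mem_jacobson_of_nil {A : Type} [Ring A] (y : A) (h : ∀ a, IsNilpotent (a * y)) :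
    y ∈ Ring.jacobson A := by
  rw [← Ideal.jacobson_bot, Ideal.mem_jacobson_iff]
  intro a
  obtain ⟨u, hu⟩ := (h a).isUnit_one_add
  refine ⟨↑u⁻¹, ?_⟩
  have : (↑u⁻¹ : A) * a * y + ↑u⁻¹ - 1 = 0 := by
    rw [mul_assoc, sub_eq_zero, ← Units.inv_mul u, hu, mul_add, mul_one, add_comm]
  rw [this]
  exact zero_mem _

/-- An idempotent `e` of a left ideal `J` of an endomorphism ring can be chosen so that the
elements of `J` vanishing on the image of `e` are nilpotent. -/
lemma exists_idem {X : Type} [AddCommGroup X] [Module Λ X] [Module.Finite Λ X]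
    (J : Ideal (Module.End Λ X)) :
    ∃ e ∈ J, e * e = e ∧ ∀ y ∈ J, y * e = 0 → IsNilpotent y := by
  let S : Set (Submodule Λ X) := {L | ∃ e ∈ J, e * e = e ∧ LinearMap.ker e = L}
  obtain ⟨L, ⟨e, heJ, hee, rfl⟩, hmin⟩ := wellFounded_lt.has_min S
    ⟨_, 0, zero_mem _, by simp, rfl⟩
  refine ⟨e, heJ, hee, fun y hy hye => ?_⟩
  by_contra hnil
  obtain ⟨n, hn0, c, hhh, hker⟩ := fitting y
  set h := c * y ^ n with hh
  have hhh : h * h = h := hhh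
  have hhJ : h ∈ J := by
    obtain ⟨k, rfl⟩ := Nat.exists_eq_succ_of_ne_zero hn0
    rw [hh, Nat.succ_eq_add_one, pow_succ, ← mul_assoc]
    exact J.mul_mem_left _ hy
  have hhe : h * e = 0 := by
    obtain ⟨k, rfl⟩ := Nat.exists_eq_succ_of_ne_zero hn0
    rw [hh, Nat.succ_eq_add_one, pow_succ, mul_assoc, mul_assoc, hye, mul_zero, mul_zero]
  have hh0 : h ≠ 0 := by
    intro h0
    refine hnil ⟨n, ?_⟩
    rw [h0, LinearMap.ker_zero] at hker
    exact LinearMap.ker_eq_top.1 hker.symm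
  -- `e + h - e h` is a larger idempotent
  have hmul : ∀ z, h * (e * z) = 0 := fun z => by rw [← mul_assoc, hhe, zero_mul]
  have hmul' : ∀ z, e * (e * z) = e * z := fun z => by rw [← mul_assoc, hee]
  set e' := e + h - e * h with he'
  have h1 : e' * e' = e' := by
    simp only [he', mul_add, add_mul, mul_sub, sub_mul, mul_assoc, hee, hhh, hhe, hmul, hmul',
      mul_zero]
    abel
  have h2 : e * e' = e := by
    simp only [he', mul_add, mul_sub, hee, hmul']
    abel
  have h3 : h * e' = h := by
    simp only [he', mul_add, mul_sub, hhe, hhh, hmul]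
    abel
  have h4 : e' ∈ J := sub_mem (add_mem heJ hhJ) (J.mul_mem_left _ hhJ)
  refine hmin (LinearMap.ker e') ⟨e', h4, h1, rfl⟩ (lt_of_le_of_ne ?_ ?_)
  · intro x hx
    have hx : e' x = 0 := hx
    have : (e * e') x = 0 := by rw [Module.End.mul_apply, hx, map_zero]
    rw [h2] at this
    exact this
  · intro heq
    apply hh0
    refine LinearMap.ext fun x => ?_
    have hx : (h - e * h) x ∈ LinearMap.ker e := by
      have : e * (h - e * h) = 0 := by rw [mul_sub, hmul', sub_self]
      exact LinearMap.congr_fun this x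
    rw [← heq] at hx
    have h5 : h * (h - e * h) = h := by rw [mul_sub, hmul, hhh, sub_zero]
    have h6 : (h * e') ((h - e * h) x) = 0 := by
      rw [Module.End.mul_apply, show e' ((h - e * h) x) = 0 from hx, map_zero]
    rw [h3] at h6
    rw [← h5]
    exact h6

/-- If `X` is not split injective in `Cogen X`, then a proper direct summand of `X` already
cogenerates `X`: among the endomorphisms of `X` factoring through a non-split embedding choose a
maximal idempotent `e`; the remaining ones are radical, so `X` is cogenerated by `e X` by
nilpotency of the radical. -/
lemma proper_cogen (K : Type) [Field K] [Algebra K Λ] [FiniteDimensional K Λ]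
    {X : Mdl Λ} (hX : Module.Finite Λ X) (h : ¬ SplitInjIn Λ (Cogen Λ X) X) :
    ∃ A B : Mdl Λ, IsoM Λ X (dsum Λ A B) ∧ ¬ IsZeroM Λ B ∧ X ∈ Cogen Λ A := by
  obtain ⟨Z, hZ, f, hf, hr⟩ : ∃ Z ∈ Cogen Λ X, ∃ f : X →ₗ[Λ] Z, Injective f ∧
      ¬ ∃ r : Z →ₗ[Λ] X, r.comp f = LinearMap.id := by
    by_contra! hcon
    exact h ⟨self_mem_cogen X hX, fun Y hY f hf => by
      by_contra hr
      exact hr (hcon Y hY f hf)⟩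
  let J : Ideal (Module.End Λ X) :=
    { carrier := {a | ∃ g : Z →ₗ[Λ] X, g ∘ₗ f = a}
      zero_mem' := ⟨0, by simp⟩
      add_mem' := by
        rintro _ _ ⟨g, rfl⟩ ⟨g', rfl⟩
        exact ⟨g + g', LinearMap.add_comp ..⟩
      smul_mem' := by
        rintro c _ ⟨g, rfl⟩
        exact ⟨c ∘ₗ g, rfl⟩ }
  have hJ : ∀ x : X, x ≠ 0 → ∃ a ∈ J, a x ≠ 0 := by
    intro x hx
    obtain ⟨g, hg⟩ := (mem_cogen.1 hZ).2 (f x) fun h0 => hx (hf (by rw [h0, map_zero]))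
    exact ⟨g ∘ₗ f, ⟨g, rfl⟩, hg⟩
  have hA : IsArtinianRing (Module.End Λ X) := end_artinian K (Λ := Λ) X
  obtain ⟨e, heJ, hee, hnil⟩ := exists_idem J
  have he1 : e ≠ 1 := by
    rintro rfl
    exact hr heJ
  have hrad : ∀ y ∈ J, y * e = 0 → y ∈ Ring.jacobson (Module.End Λ X) := by
    intro y hy hye
    exact mem_jacobson_of_nil y fun a =>
      hnil _ (J.mul_mem_left a hy) (by rw [mul_assoc, hye, mul_zero])
  obtain ⟨N, hN⟩ := IsSemiprimaryRing.isNilpotent (R := Module.End Λ X)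
  have hex : ∀ x, e (e x) = e x := fun x => LinearMap.congr_fun hee x
  have hret : e.rangeRestrict ∘ₗ (LinearMap.range e).subtype = LinearMap.id := by
    ext ⟨_, z, rfl⟩
    exact hex z
  refine ⟨ModuleCat.of Λ (LinearMap.range e), _,
    split_iso (A := ModuleCat.of Λ (LinearMap.range e)) hret, ?_, ?_⟩
  · intro hz
    apply he1
    refine LinearMap.ext fun x => ?_
    have h1 : x - e x ∈ LinearMap.ker e.rangeRestrict := by
      rw [LinearMap.ker_rangeRestrict, LinearMap.mem_ker, map_sub, hex, sub_self]
    have := congrArg Subtype.val (hz.elim (⟨_, h1⟩ : LinearMap.ker e.rangeRestrict) 0)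
    exact (sub_eq_zero.1 this).symm
  · refine mem_cogen.2 ⟨hX, fun x hx => ?_⟩
    by_contra! hcon
    have hS : ∀ a : Module.End Λ X, e (a x) = 0 := fun a =>
      congrArg Subtype.val (hcon (e.rangeRestrict ∘ₗ a))
    -- products of arbitrarily many radical elements act nontrivially on `x`
    have key : ∀ n : ℕ, ∃ z ∈ Ring.jacobson (Module.End Λ X) ^ n, z x ≠ 0 := by
      intro n
      induction n with
      | zero => exact ⟨1, by rw [Submodule.pow_zero, Ideal.one_eq_top]; trivial, hx⟩
      | succ n ih =>
        obtain ⟨z, hz, hzx⟩ := ih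
        obtain ⟨a, ha, hazx⟩ := hJ _ hzx
        have hy : a - a * e ∈ Ring.jacobson (Module.End Λ X) := by
          apply hrad _ (sub_mem ha (J.mul_mem_left a heJ))
          rw [sub_mul, mul_assoc, hee, sub_self]
        refine ⟨(a - a * e) * z, ?_, ?_⟩
        · rw [Ideal.IsTwoSided.pow_succ]
          exact Ideal.mul_mem_mul hy hz
        · simpa [hS z] using hazx
    obtain ⟨z, hz, hzx⟩ := key N
    rw [hN] at hz
    have hz : z = 0 := by simpa using hz
    exact hzx (by rw [hz]; rfl)

end SplitInjective

end Paper

/-! ### Cogen-minimal modules as split injective generators -/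

namespace Paper

section Minimality

set_option linter.unusedSectionVars false

variable {Λ : Type} [Ring Λ] [IsArtinianRing Λ]

/-- A basic cogen-minimal module is split injective in the subcategory it cogenerates. -/
lemma splitInj_of_minimal (K : Type) [Field K] [Algebra K Λ] [FiniteDimensional K Λ]
    {X : Mdl Λ} (hX : Module.Finite Λ X) (hb : IsBasic Λ X) (hm : CogenMinimal Λ X) :
    SplitInjIn Λ (Cogen Λ X) X := by
  by_contra hcon
  obtain ⟨A, B, hAB, hB0, hXA⟩ := proper_cogen K hX hcon
  have hBX := (summand_right A B).trans hAB.symm.summand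
  obtain ⟨Y, hY, hYB⟩ := exists_indec (hBX.finite hX) hB0
  obtain ⟨B', hB'⟩ := hYB.compl
  have hYX := hYB.trans hBX
  have hiso : IsoM Λ X (dsum Λ (dsum Λ A B') Y) :=
    (hAB.trans (dsum_congr ⟨LinearEquiv.refl Λ A⟩ (hB'.trans (dsum_comm Y B')))).trans
      (dsum_assoc A B' Y).symm
  have hW : Module.Finite Λ (dsum Λ A B') :=
    ((summand_left _ Y).trans hiso.symm.summand).finite hX
  have hAW : A ∈ Cogen Λ (dsum Λ A B') :=
    cogen_summand (summand_left A B') (self_mem_cogen _ hW)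
  refine hm Y hY hYX (dsum Λ A B') ⟨Y, hiso, fun V _ hV => summand_add hV, fun V hV hVW hVY => ?_⟩
    (cogen_trans hAW (cogen_summand hYX hXA))
  have hVf : Module.Finite Λ V := hVW.finite hW
  have h1 : IsSummand Λ Y (dsum Λ A B') :=
    (indec_add_indec hVf hV hY hVY).symm.summand.trans hVW
  exact hb Y hY.1 ((h1.dsum_left Y).trans hiso.symm.summand)

/-- Retract first onto `A`; then `B` embeds into the kernel of that retraction, which is again in
`Cogen W`. -/
lemma splitInj_dsum {W A B : Mdl Λ} (hA : SplitInjIn Λ (Cogen Λ W) A)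
    (hB : SplitInjIn Λ (Cogen Λ W) B) : SplitInjIn Λ (Cogen Λ W) (dsum Λ A B) := by
  refine ⟨cogen_dsum hA.1 hB.1, fun Y hY F hF => ?_⟩
  let f : (A × B) →ₗ[Λ] Y := F
  have hf : Injective f := hF
  obtain ⟨r, hr⟩ := hA.2 Y hY (f ∘ₗ LinearMap.inl Λ A B)
    (hf.comp LinearMap.inl_injective)
  have hr : ∀ a, r (f (a, 0)) = a := LinearMap.congr_fun hr
  let g : B →ₗ[Λ] LinearMap.ker r :=
    (f ∘ₗ LinearMap.inr Λ A B - f ∘ₗ LinearMap.inl Λ A B ∘ₗ r ∘ₗ f ∘ₗ LinearMap.inr Λ A B).codRestrict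
      (LinearMap.ker r) (fun b => by simp [hr])
  have hg : ∀ b, (g b).1 = f (0, b) - f (r (f (0, b)), 0) := fun b => rfl
  obtain ⟨s, hs⟩ := hB.2 (ModuleCat.of Λ (LinearMap.ker r))
    (cogen_of_sub hY (LinearMap.ker r).subtype (LinearMap.ker r).injective_subtype) g (by
      rw [← LinearMap.ker_eq_bot, LinearMap.ker_eq_bot']
      intro b hb
      have h1 := hg b
      rw [hb, eq_comm, ← map_sub] at h1
      have h2 := hf (h1.trans (map_zero f).symm)
      simpa using congrArg Prod.snd h2)
  have hs : ∀ b, s (g b) = b := LinearMap.congr_fun hs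
  let t : Y →ₗ[Λ] B := s ∘ₗ
    (LinearMap.id - f ∘ₗ LinearMap.inl Λ A B ∘ₗ r).codRestrict (LinearMap.ker r)
      (fun y => by simp [hr])
  have ht : ∀ a b, t (f (a, b)) = b := by
    intro a b
    conv_rhs => rw [← hs b]
    refine congrArg s (Subtype.ext ?_)
    rw [hg]
    have h1 : f (a, b) = f (a, 0) + f (0, b) := by rw [← map_add]; simp
    have h2 : f (r (f (a, b)), 0) = f (a, 0) + f (r (f (0, b)), 0) := by
      rw [← map_add, h1, map_add, hr]; simp
    change f (a, b) - f (r (f (a, b)), 0) = _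
    rw [h2, h1]
    abel
  refine ⟨(r - r ∘ₗ f ∘ₗ LinearMap.inr Λ A B ∘ₗ t).prod t, LinearMap.ext fun ⟨a, b⟩ => ?_⟩
  refine Prod.ext ?_ (ht a b)
  change r (f (a, b)) - r (f (0, t (f (a, b)))) = a
  rw [ht, ← map_sub, ← map_sub]
  simpa using hr a

/-- Add a complement of `A` in `B` to both sides of an embedding of `A`. -/
lemma splitInj_summand {W A B : Mdl Λ} (h : IsSummand Λ A B)
    (hB : SplitInjIn Λ (Cogen Λ W) B) : SplitInjIn Λ (Cogen Λ W) A := by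
  refine ⟨cogen_summand h hB.1, fun Y hY f hf => ?_⟩
  obtain ⟨C, ⟨e⟩⟩ := h.compl
  let e : B ≃ₗ[Λ] (A × C) := e
  have hC : C ∈ Cogen Λ W :=
    cogen_summand ((summand_right A C).trans (IsoM.summand ⟨e.symm⟩)) hB.1
  have hinj : Injective (f.prodMap (LinearMap.id : C →ₗ[Λ] C)) := by
    rintro ⟨a, c⟩ ⟨a', c'⟩ hac
    have h1 : f a = f a' := congrArg Prod.fst hac
    have h2 : c = c' := congrArg Prod.snd hac
    rw [hf h1, h2]
  obtain ⟨r, hr⟩ := hB.2 (dsum Λ Y C) (cogen_dsum hY hC)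
    (f.prodMap (LinearMap.id : C →ₗ[Λ] C) ∘ₗ e.toLinearMap) (hinj.comp e.injective)
  let r' : (Y × C) →ₗ[Λ] B := r
  refine ⟨LinearMap.fst Λ A C ∘ₗ e.toLinearMap ∘ₗ r' ∘ₗ LinearMap.inl Λ Y C,
    LinearMap.ext fun a => ?_⟩
  have h1 : r' (f (e (e.symm (a, 0))).1, (e (e.symm (a, 0))).2) = e.symm (a, 0) :=
    LinearMap.congr_fun hr (e.symm (a, 0))
  rw [e.apply_symm_apply] at h1
  change (e (r' (f a, 0))).1 = a
  rw [h1, e.apply_symm_apply]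

lemma splitInj_pi {W X : Mdl Λ} (hX : SplitInjIn Λ (Cogen Λ W) X) (n : ℕ) :
    SplitInjIn Λ (Cogen Λ W) (ModuleCat.of Λ (Fin n → X)) := by
  induction n with
  | zero =>
    refine ⟨mem_cogen.2 ⟨inferInstanceAs (Module.Finite Λ (Fin 0 → X)),
      fun m hm => (hm (Subsingleton.elim (α := Fin 0 → X) _ _)).elim⟩, fun Y _ f _ => ⟨0, ?_⟩⟩
    exact LinearMap.ext fun x => Subsingleton.elim (α := Fin 0 → X) _ _
  | succ n ih =>
    exact splitInj_summand
      (IsoM.summand ⟨(Fin.consLinearEquiv Λ (fun _ : Fin (n + 1) => (X : Type))).symm⟩)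
      (splitInj_dsum hX ih)

/-- The module `X` is itself `I_s(Cogen X)`. -/
lemma isMinSplitInj {X : Mdl Λ} (hb : IsBasic Λ X) (hX : SplitInjIn Λ (Cogen Λ X) X) :
    IsMinSplitInj Λ (Cogen Λ X) X := by
  refine ⟨hb, Set.Subset.antisymm ?_ ?_⟩
  · rintro Z ⟨n, hZ⟩
    exact splitInj_summand hZ (splitInj_pi hX n)
  · intro Z hZ
    obtain ⟨n, e, he⟩ := cogen_embed hZ.1
    obtain ⟨r, hr⟩ := hZ.2 _ (splitInj_pi hX n).1 e he
    exact ⟨n, e, r, hr⟩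

lemma dsum_zero_iso {A B : Mdl Λ} (hB : IsZeroM Λ B) : IsoM Λ (dsum Λ A B) A := by
  have : Subsingleton B := hB
  have : Unique B := ⟨⟨0⟩, fun x => Subsingleton.elim _ _⟩
  exact ⟨(LinearEquiv.prodUnique : (A × B) ≃ₗ[Λ] A)⟩

lemma basic_summand_aux {X X' : Mdl Λ} (hX : Module.Finite Λ X) (hb : IsBasic Λ X)
    (h : X ∈ addOf Λ X') (ℓ : ℕ∞) : ∀ D E E' : Mdl Λ, Module.length Λ E = ℓ →
      IsoM Λ X (dsum Λ D E) → IsoM Λ X' (dsum Λ D E') → IsSummand Λ X X' := by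
  induction ℓ using WellFoundedLT.induction with
  | ind ℓ ih =>
  intro D E E' hℓ hE hE'
  by_cases h0 : IsZeroM Λ E
  · exact (hE.trans (dsum_zero_iso h0)).summand.trans
      ((summand_left D E').trans hE'.symm.summand)
  have hEX := (summand_right D E).trans hE.symm.summand
  have hEf := hEX.finite hX
  obtain ⟨V, hV, hVE⟩ := exists_indec hEf h0
  obtain ⟨E₁, hE₁⟩ := hVE.compl
  have hVf := hVE.finite hEf
  obtain ⟨n, hn⟩ := h
  have hVX' : IsSummand Λ V X' :=
    indec_summand_pi hVf hV ⟨n, (hVE.trans hEX).trans hn⟩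
  rcases indec_summand_dsum hVf hV (hVX'.trans hE'.summand) with h1 | h1
  · exfalso
    refine hb V hV.1 (((h1.dsum_left V).trans (dsum_comm D V).summand).trans
      (((hVE.dsum_left D).trans (dsum_comm E D).summand).trans hE.symm.summand))
  · obtain ⟨E₁', hE₁'⟩ := h1.compl
    refine ih _ (hℓ ▸ length_lt_of_dsum hEf (hE₁.trans (dsum_comm V E₁)) hV.1)
      (dsum Λ D V) E₁ E₁' rfl ?_ ?_
    · exact (hE.trans (dsum_congr ⟨LinearEquiv.refl Λ D⟩ hE₁)).trans (dsum_assoc D V E₁).symm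
    · exact (hE'.trans (dsum_congr ⟨LinearEquiv.refl Λ D⟩ hE₁')).trans (dsum_assoc D V E₁').symm

/-- A basic module in `add X'` is a direct summand of `X'`: split off common indecomposable
summands one at a time. -/
lemma basic_summand {X X' : Mdl Λ} (hX : Module.Finite Λ X) (hb : IsBasic Λ X)
    (h : X ∈ addOf Λ X') : IsSummand Λ X X' := by
  have hz : IsZeroM Λ (ModuleCat.of Λ PUnit) := inferInstanceAs (Subsingleton PUnit)
  exact basic_summand_aux hX hb h _ (ModuleCat.of Λ PUnit) X X' rfl
    ((dsum_comm _ _).trans (dsum_zero_iso hz)).symm ((dsum_comm _ _).trans (dsum_zero_iso hz)).symm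

lemma iso_of_summand {X X' : Mdl Λ} (hX' : Module.Finite Λ X') (h : IsSummand Λ X X')
    (h' : IsSummand Λ X' X) : IsoM Λ X X' := by
  obtain ⟨B, hB⟩ := h.compl
  by_cases h0 : IsZeroM Λ B
  · exact (hB.trans (dsum_zero_iso h0)).symm
  · obtain ⟨C, hC⟩ := h'.compl
    have h1 := length_lt_of_dsum hX' hB h0
    rw [length_iso hC, length_dsum] at h1
    exact absurd (lt_of_le_of_lt le_self_add h1) (lt_irrefl _)

/-- The basic module generating an additive closure is unique up to isomorphism. -/
lemma iso_of_minSplitInj {C : Set (Mdl Λ)} {X X' : Mdl Λ} (hX : Module.Finite Λ X)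
    (hX' : Module.Finite Λ X') (h : IsMinSplitInj Λ C X) (h' : IsMinSplitInj Λ C X') :
    IsoM Λ X X' := by
  have heq := h.2.trans h'.2.symm
  refine iso_of_summand hX' (basic_summand hX h.1 ?_) (basic_summand hX' h'.1 ?_)
  · rw [← heq]; exact summand_add (IsSummand.refl X)
  · rw [heq]; exact summand_add (IsSummand.refl X')

end Minimality

end Paper

/-! ### Covers of torsion-free classes -/

namespace Paper

section Pop

set_option linter.unusedSectionVars false

variable {Λ : Type} [Ring Λ] [IsArtinianRing Λ]

lemma torf_sInter {S : Set (Set (Mdl Λ))} (hne : S.Nonempty) (h : ∀ H ∈ S, IsTorf Λ H) :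
    IsTorf Λ (⋂₀ S) := by
  obtain ⟨H₀, hH₀⟩ := hne
  have hz : IsZeroM Λ (ModuleCat.of Λ PUnit) := inferInstanceAs (Subsingleton PUnit)
  refine ⟨fun M hM => (h H₀ hH₀).1 (hM H₀ hH₀),
    ⟨_, fun H hH => torf_zero (h H hH) hz, hz⟩, ?_, ?_⟩
  · intro A E B f g hse hA hB hE H hH
    exact (h H hH).2.2.1 A E B f g hse (hA H hH) (hB H hH) hE
  · intro M N hM hN hf H hH
    exact (h H hH).2.2.2 M N hM (hN H hH) hf

lemma torf_inter {F G : Set (Mdl Λ)} (hF : IsTorf Λ F) (hG : IsTorf Λ G) : IsTorf Λ (F ∩ G) := by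
  rw [← Set.sInter_pair]
  refine torf_sInter ⟨F, by simp⟩ ?_
  rintro H (rfl | rfl)
  exacts [hF, hG]

lemma torf_modAll : IsTorf Λ (modAll Λ) :=
  have hz : IsZeroM Λ (ModuleCat.of Λ PUnit) := inferInstanceAs (Subsingleton PUnit)
  ⟨subset_rfl, ⟨_, inferInstanceAs (Module.Finite Λ PUnit), hz⟩, fun _ _ _ _ _ _ _ _ h => h,
    fun _ _ h _ _ => h⟩

/-- The modules receiving no nonzero map from `E` form a torsion-free class. -/
lemma torf_perp (E : Mdl Λ) :
    IsTorf Λ {M : Mdl Λ | Module.Finite Λ M ∧ ∀ f : E →ₗ[Λ] M, f = 0} := by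
  have hz : Subsingleton PUnit := inferInstance
  refine ⟨fun M hM => hM.1, ⟨ModuleCat.of Λ PUnit, ⟨inferInstanceAs (Module.Finite Λ PUnit),
    fun f => LinearMap.ext fun x => hz.elim _ _⟩, hz⟩, ?_, ?_⟩
  · intro A Z B f g hse hA hB hZ
    refine ⟨hZ, fun h => ?_⟩
    obtain ⟨h', hh'⟩ := factor_inj hse.1 h (by
      rw [hse.2.2]
      rintro _ ⟨x, rfl⟩
      exact LinearMap.congr_fun (hB.2 (g ∘ₗ h)) x)
    rw [← hh', hA.2 h', LinearMap.comp_zero]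
  · rintro M N hM hN ⟨f, hf⟩
    refine ⟨hM, fun h => LinearMap.ext fun x => hf ?_⟩
    rw [LinearMap.zero_apply, map_zero]
    exact LinearMap.congr_fun (hN.2 (f ∘ₗ h)) x

lemma torf_of_ker_bot {F : Set (Mdl Λ)} (hF : IsTorf Λ F) {M : Mdl Λ} {N : Submodule Λ M}
    (hN : ModuleCat.of Λ (M ⧸ N) ∈ F) (h : N = ⊥) : M ∈ F :=
  torf_sub hF hN N.mkQ (by rw [← LinearMap.ker_eq_bot, Submodule.ker_mkQ, h])

/-- If the torsion-free class `F'` is not contained in `F`, it contains a nonzero object of `⊥F`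
all of whose proper submodules lie in `F`. -/
lemma exists_min_torsion {F F' : Set (Mdl Λ)} (hF : IsTorf Λ F) (hF' : IsTorf Λ F')
    (h : ¬ F' ⊆ F) : ∃ E ∈ F', ¬ IsZeroM Λ E ∧ (∀ Y ∈ F, ∀ f : E →ₗ[Λ] Y, f = 0) ∧
      ∀ U : Submodule Λ E, U ≠ ⊤ → ModuleCat.of Λ U ∈ F := by
  let S : Set (Mdl Λ) := {E | E ∈ F' ∧ ¬ IsZeroM Λ E ∧ ∀ Y ∈ F, ∀ f : E →ₗ[Λ] Y, f = 0}
  have hS : S.Nonempty := by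
    obtain ⟨M, hM, hMF⟩ := Set.not_subset.1 h
    obtain ⟨N, hN, h0⟩ := torf_radical hF M (torf_finite hF' hM)
    refine ⟨ModuleCat.of Λ N, torf_submodule hF' hM N, fun hz => hMF ?_, h0⟩
    exact torf_of_ker_bot hF hN (Submodule.subsingleton_iff_eq_bot.1 hz)
  obtain ⟨E, ⟨hE, hE0, hEF⟩, hmin⟩ :=
    (InvImage.wf (fun M : Mdl Λ => Module.length Λ M) wellFounded_lt).has_min S hS
  refine ⟨E, hE, hE0, hEF, fun U hU => ?_⟩
  have hfin := torf_finite hF' hE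
  have hUF' := torf_submodule hF' hE U
  obtain ⟨V, hV, hV0⟩ := torf_radical hF (ModuleCat.of Λ U) (torf_finite hF' hUF')
  by_contra hcon
  refine hmin (ModuleCat.of Λ V) ⟨torf_submodule hF' hUF' V, fun hz => hcon ?_, hV0⟩ ?_
  · exact torf_of_ker_bot hF hV (Submodule.subsingleton_iff_eq_bot.1 hz)
  · have h1 : Module.length Λ U < Module.length Λ E := Submodule.length_lt hU
    have h2 : Module.length Λ V ≤ Module.length Λ U :=
      Module.length_le_of_injective V.subtype V.injective_subtype
    exact h2.trans_lt h1

/-- A nonzero map out of an object of `⊥F` with image in `F` unless surjective is surjective. -/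
lemma surj_of_ne_zero {F : Set (Mdl Λ)} {E M : Mdl Λ} (hE : ∀ Y ∈ F, ∀ f : E →ₗ[Λ] Y, f = 0)
    (hM : ∀ U : Submodule Λ M, U ≠ ⊤ → ModuleCat.of Λ U ∈ F) {g : E →ₗ[Λ] M} (hg : g ≠ 0) :
    Surjective g := by
  by_contra hcon
  apply hg
  have := hE _ (hM (LinearMap.range g) (fun h => hcon (LinearMap.range_eq_top.1 h)))
    g.rangeRestrict
  ext x
  exact congrArg Subtype.val (LinearMap.congr_fun this x)

lemma finite_ext {A E B : Mdl Λ} {f : A →ₗ[Λ] E} {g : E →ₗ[Λ] B} (h : IsSESeq Λ f g)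
    (hA : Module.Finite Λ A) (hB : Module.Finite Λ B) : Module.Finite Λ E := by
  have h1 : Module.Finite Λ (LinearMap.ker g) := by
    rw [← h.2.2]; exact Module.Finite.range f
  have h2 : Module.Finite Λ (E ⧸ LinearMap.ker g) :=
    Module.Finite.equiv (g.quotKerEquivOfSurjective h.2.1).symm
  exact Module.Finite.of_submodule_quotient (LinearMap.ker g)

/-- If `X` is `τ⁻¹`-rigid and split injective in `Cogen X`, then every cover of `Cogen X` is
contained in `(τ⁻¹X)^⊥`. Otherwise a minimal torsion object `E` of the cover has a nonsplit
extension by `X`; its middle term lies in the cover but not in `Cogen X`, hence receives a nonzero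
map from `E`, and this map splits the extension. -/
lemma cover_subset_perp {X : Mdl Λ} (P : Copres X) (hX : TauInvRigid Λ X)
    (hsi : SplitInjIn Λ (Cogen Λ X) X) {F' : Set (Mdl Λ)}
    (hc : CoversIn Λ (modAll Λ) F' (Cogen Λ X)) : F' ⊆ perpTauInv Λ X := by
  obtain ⟨hF, hF', hss, hmin⟩ := hc
  have hF : IsTorf Λ (Cogen Λ X) := hF
  have hF' : IsTorf Λ F' := hF'
  have hG := perp_torf P
  -- a torsion-free class between `Cogen X` and its cover is one of the two
  have hcov : ∀ T, IsTorf Λ T → Cogen Λ X ⊆ T → ¬ F' ⊆ T → ∀ Z ∈ F', Z ∈ T → Z ∈ Cogen Λ X := by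
    intro T hT hFT hns Z hZ hZT
    by_contra hZF
    apply hns
    have : F' ∩ T = F' := hmin _ (torf_inter hF' hT)
      ⟨Set.subset_inter hss.1 hFT, fun h => hZF (h ⟨hZ, hZT⟩)⟩ Set.inter_subset_left
    exact Set.inter_eq_left.1 this
  by_contra hns
  obtain ⟨E, hE, hE0, hEF, hEU⟩ := exists_min_torsion hF hF' hss.2
  have hfinE := torf_finite hF' hE
  have hXF : X ∈ Cogen Λ X := hsi.1
  have hid : ¬ (LinearMap.id : E →ₗ[Λ] E) = 0 := by
    intro h
    apply hE0
    exact ⟨fun x y => (LinearMap.congr_fun h x).trans (LinearMap.congr_fun h y).symm⟩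
  have hEnF : E ∉ Cogen Λ X := fun h => hid (hEF E h _)
  have hEG : E ∉ perpTauInv Λ X := fun h =>
    hEnF (hcov _ hG (cogen_subset_perp hX) hns E hE h)
  have hext : ¬ Ext1Zero Λ E X := by
    rw [P.ext1_iff]
    intro hlift
    apply hEG
    refine P.mem_perp_iff.2 ⟨hfinE, fun f => ?_⟩
    by_cases hU : (LinearMap.range P.p).comap f = ⊤
    · apply hlift
      rintro _ ⟨x, rfl⟩
      have : x ∈ (LinearMap.range P.p).comap f := hU ▸ Submodule.mem_top
      exact this
    · obtain ⟨g₀, hg₀⟩ := (P.mem_perp_iff.1 (cogen_subset_perp hX (hEU _ hU))).2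
        (f ∘ₗ ((LinearMap.range P.p).comap f).subtype)
      exact P.lift_of_restrict f g₀ (fun x => LinearMap.congr_fun hg₀ x)
  unfold Ext1Zero at hext
  push Not at hext
  obtain ⟨Z, a, b, hse, hsec⟩ := hext
  have hZfin : Module.Finite Λ Z := finite_ext hse hX.1 hfinE
  have hZ : Z ∈ F' := hF'.2.2.1 X Z E a b hse (hss.1 hXF) hE hZfin
  have hZF : Z ∉ Cogen Λ X := by
    intro hZF
    obtain ⟨r, hr⟩ := hsi.2 Z hZF a hse.1
    obtain ⟨s, hs⟩ := Copres.section_of_retraction hse.2.1 hse.2.2 hr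
    exact hsec s hs
  obtain ⟨g, hg⟩ : ∃ g : E →ₗ[Λ] Z, g ≠ 0 := by
    by_contra! hcon
    refine hZF (hcov _ (torf_perp E) (fun Y hY => ⟨hY.1, hEF Y hY⟩) (fun h => ?_) Z hZ
      ⟨hZfin, hcon⟩)
    exact hid ((h hE).2 _)
  by_cases hbg : b ∘ₗ g = 0
  · obtain ⟨h, hh⟩ := factor_inj hse.1 g (by
      rw [hse.2.2]
      rintro _ ⟨x, rfl⟩
      exact LinearMap.congr_fun hbg x)
    apply hg
    rw [← hh, hEF X hXF h, LinearMap.comp_zero]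
  · have hsurj := surj_of_ne_zero hEF hEU hbg
    have hinj := IsNoetherian.injective_of_surjective_endomorphism (b ∘ₗ g) hsurj
    let e := LinearEquiv.ofBijective (b ∘ₗ g) ⟨hinj, hsurj⟩
    refine hsec (g ∘ₗ e.symm.toLinearMap) (LinearMap.ext fun x => ?_)
    exact e.apply_symm_apply x

/-- A torsion-free class containing `Cogen X` and all its covers contains `(τ⁻¹X)^⊥`. A minimal
counterexample `M` lies in `⊥X` and has all proper submodules in `Cogen X`, which makes the
torsion-free class generated by `Cogen X` and `M` a cover of `Cogen X`. -/
lemma perp_subset_of_covers {X : Mdl Λ} (P : Copres X) (hX : TauInvRigid Λ X)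
    {H : Set (Mdl Λ)} (hH : IsTorf Λ H) (hFH : Cogen Λ X ⊆ H)
    (hcov : ∀ F', CoversIn Λ (modAll Λ) F' (Cogen Λ X) → F' ⊆ H) : perpTauInv Λ X ⊆ H := by
  have hF := cogen_torf P hX
  have hG := perp_torf P
  have hXF : X ∈ Cogen Λ X := self_mem_cogen X hX.1
  by_contra hns
  obtain ⟨M, ⟨hMG, hMH⟩, hmin⟩ :=
    (InvImage.wf (fun M : Mdl Λ => Module.length Λ M) wellFounded_lt).has_min
      (perpTauInv Λ X \ H) (Set.not_subset.1 hns)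
  have hsmall : ∀ Y : Mdl Λ, Y ∈ perpTauInv Λ X → Module.length Λ Y < Module.length Λ M → Y ∈ H :=
    fun Y hY hlt => by
      by_contra hcon
      exact hmin Y ⟨hY, hcon⟩ hlt
  have hfin := torf_finite hG hMG
  have hMF : ∀ Y ∈ Cogen Λ X, ∀ f : M →ₗ[Λ] Y, f = 0 := by
    obtain ⟨N, hN, hN0⟩ := torf_radical hF M hfin
    have hNT : N = ⊤ := by
      by_contra hNT
      refine hMH (torf_ext hH hfin N (hsmall _ (torf_submodule hG hMG N) ?_) (hFH hN))
      exact Submodule.length_lt hNT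
    intro Y hY f
    ext x
    exact LinearMap.congr_fun (hN0 Y hY (f ∘ₗ N.subtype)) ⟨x, hNT ▸ Submodule.mem_top⟩
  have hbot : ∀ V : Submodule Λ M, V ≠ ⊤ → (∀ f : V →ₗ[Λ] X, f = 0) → V = ⊥ := by
    intro V hVT hV
    by_contra hV0
    refine hMH (torf_ext hH hfin V (hsmall _ (torf_submodule hG hMG V) ?_)
      (hsmall _ (perp_quotient P hMG V hV) ?_))
    · exact Submodule.length_lt hVT
    · exact Submodule.length_quotient_lt V hV0
  have hMU : ∀ U : Submodule Λ M, U ≠ ⊤ → ModuleCat.of Λ U ∈ Cogen Λ X := by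
    intro U hU
    have hUfin := torf_finite hG (torf_submodule hG hMG U)
    obtain ⟨V, hV, hV0⟩ := torf_radical hF (ModuleCat.of Λ U) hUfin
    refine torf_of_ker_bot hF hV ?_
    let V : Submodule Λ U := V
    have hV0 : ∀ f : V →ₗ[Λ] X, f = 0 := hV0 X hXF
    have hle : V.map U.subtype ≤ U := by
      rintro _ ⟨x, -, rfl⟩
      exact x.2
    have hb := hbot (V.map U.subtype) (fun h => hU (top_le_iff.1 (h ▸ hle))) (fun f => by
      let e := V.equivMapOfInjective U.subtype U.injective_subtype
      have := hV0 (f ∘ₗ e.toLinearMap)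
      ext x
      obtain ⟨y, rfl⟩ := e.surjective x
      exact LinearMap.congr_fun this y)
    exact Submodule.map_injective_of_injective U.injective_subtype (hb.trans (Submodule.map_bot _).symm)
  have hMnF : M ∉ Cogen Λ X := fun h => hMH (hFH h)
  let S : Set (Set (Mdl Λ)) := {T | IsTorf Λ T ∧ Cogen Λ X ⊆ T ∧ M ∈ T}
  have hT : IsTorf Λ (⋂₀ S) :=
    torf_sInter ⟨modAll Λ, torf_modAll, hF.1, hfin⟩ (fun T hT => hT.1)
  have hMT : M ∈ ⋂₀ S := fun T hT => hT.2.2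
  refine hMH (hcov (⋂₀ S) ⟨hF, hT, ⟨fun Y hY T hT => hT.2.1 hY, fun h => hMnF (h hMT)⟩, ?_⟩ hMT)
  intro F'' hF'' hss hle
  have hF'' : IsTorf Λ F'' := hF''
  refine hle.antisymm (Set.sInter_subset_of_mem ⟨hF'', hss.1, ?_⟩)
  obtain ⟨E, hE, hE0, hEF, hEU⟩ := exists_min_torsion hF hF'' hss.2
  have hfinE := torf_finite hF'' hE
  obtain ⟨g, hg⟩ : ∃ g : E →ₗ[Λ] M, g ≠ 0 := by
    by_contra! hcon
    have := (hle hE) _ ⟨torf_perp E, fun Y hY => ⟨hY.1, hEF Y hY⟩, hfin, hcon⟩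
    have hid := this.2 LinearMap.id
    exact hE0 ⟨fun x y => (LinearMap.congr_fun hid x).trans (LinearMap.congr_fun hid y).symm⟩
  have hsurj := surj_of_ne_zero hEF hMU hg
  have hker : LinearMap.ker g = ⊥ := by
    have hkF := hEU (LinearMap.ker g) (fun h => hg (LinearMap.ker_eq_top.1 h))
    rw [eq_bot_iff]
    intro x hx
    by_contra hx0
    obtain ⟨s, hs⟩ := (mem_cogen.1 hkF).2 ⟨x, hx⟩
      (fun h => hx0 (congrArg Subtype.val h))
    obtain ⟨k, hk⟩ := P.extend_of_lift (fun φ _ => (P.mem_perp_iff.1 hMG).2 φ)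
      (LinearMap.ker g).injective_subtype hsurj (Submodule.range_subtype _) s
    apply hs
    rw [← hk, hEF X hXF k]
    rfl
  let e := LinearEquiv.ofBijective g ⟨LinearMap.ker_eq_bot.1 hker, hsurj⟩
  exact torf_sub hF'' hE e.symm.toLinearMap e.symm.injective

/-- `(τ⁻¹X)^⊥` is the join of `Cogen X` and its covers. -/
lemma perp_eq_pop {X : Mdl Λ} (P : Copres X) (hX : TauInvRigid Λ X)
    (hsi : SplitInjIn Λ (Cogen Λ X) X) :
    perpTauInv Λ X = popIn Λ (modAll Λ) (modAll Λ) (Cogen Λ X) := by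
  refine Set.Subset.antisymm ?_ ?_
  · rintro M hM H ⟨hH, hFH, hcov⟩
    exact perp_subset_of_covers P hX hH hFH (fun F' hF' => hcov F' hF' hF'.2.1.1) hM
  · refine Set.sInter_subset_of_mem ⟨perp_torf P, cogen_subset_perp hX, fun F' hF' _ => ?_⟩
    exact cover_subset_perp P hX hsi hF'

end Pop

end Paper

/-! ### Cogenerators of functorially finite torsion-free classes -/

namespace Paper

section Generator

set_option linter.unusedSectionVars false

variable {Λ : Type} [Ring Λ] [IsArtinianRing Λ]

lemma cogen_eq {X Y : Mdl Λ} (h : X ∈ Cogen Λ Y) (h' : Y ∈ Cogen Λ X) : Cogen Λ X = Cogen Λ Y :=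
  Set.Subset.antisymm (fun _ hM => cogen_trans h hM) (fun _ hM => cogen_trans h' hM)

/-- A covariantly finite torsion-free class is cogenerated by a right approximation of an
injective cogenerator. -/
lemma exists_generator (K : Type) [Field K] [Algebra K Λ] [FiniteDimensional K Λ]
    {F : Set (Mdl Λ)} (hF : IsTorf Λ F) (hcf : CovFin Λ F) :
    ∃ Y : Mdl Λ, Module.Finite Λ Y ∧ Cogen Λ Y = F := by
  obtain ⟨Y, hY, h, hh⟩ := hcf (ModuleCat.of Λ (Coind K Λ)) (coind_finite (Λ := Λ) K)
  refine ⟨Y, torf_finite hF hY, (cogen_subset_torf hF hY).antisymm fun M hM => ?_⟩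
  refine mem_cogen.2 ⟨torf_finite hF hM, fun m hm => ?_⟩
  obtain ⟨f, hf⟩ := coind_separates (Λ := Λ) K m hm
  obtain ⟨g, hg⟩ := hh M hM f
  refine ⟨g, fun h0 => hf ?_⟩
  rw [← hg, LinearMap.comp_apply, h0, map_zero]

/-- A split injective object cogenerating a torsion-free class is `τ⁻¹`-rigid. -/
lemma rigid_of_splitInj {X : Mdl Λ} (hF : IsTorf Λ (Cogen Λ X))
    (hsi : SplitInjIn Λ (Cogen Λ X) X) : TauInvRigid Λ X := by
  refine ⟨hsi.1.1, fun N hN E f g hse => ?_⟩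
  have hE := hF.2.2.1 X E N f g hse hsi.1 hN (finite_ext hse hsi.1.1 hN.1)
  obtain ⟨r, hr⟩ := hsi.2 E hE f hse.1
  exact Copres.section_of_retraction hse.2.1 hse.2.2 hr

/-- A covariantly finite torsion-free class is `Cogen X` for a basic, cogen-minimal module `X`
which is split injective in it, namely a cogenerator of minimal length. -/
lemma exists_min_generator (K : Type) [Field K] [Algebra K Λ] [FiniteDimensional K Λ]
    {F : Set (Mdl Λ)} (hF : IsTorf Λ F) (hcf : CovFin Λ F) :
    ∃ X : Mdl Λ, Cogen Λ X = F ∧ IsBasic Λ X ∧ CogenMinimal Λ X ∧ SplitInjIn Λ F X := by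
  obtain ⟨X, ⟨hX, rfl⟩, hmin⟩ :=
    (InvImage.wf (fun M : Mdl Λ => Module.length Λ M) wellFounded_lt).has_min
      {X : Mdl Λ | Module.Finite Λ X ∧ Cogen Λ X = F} (exists_generator K hF hcf)
  have hsmall : ∀ A B : Mdl Λ, IsoM Λ X (dsum Λ A B) → X ∈ Cogen Λ A → IsZeroM Λ B := by
    intro A B hAB hXA
    by_contra hB
    have hA := (summand_left A B).trans hAB.symm.summand
    exact hmin A ⟨hA.finite hX, cogen_eq (cogen_summand hA (self_mem_cogen X hX)) hXA⟩
      (length_lt_of_dsum hX hAB hB)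
  refine ⟨X, rfl, ?_, ?_, ?_⟩
  · intro N hN hNN
    obtain ⟨C, hC⟩ := hNN.compl
    have hiso : IsoM Λ X (dsum Λ (dsum Λ N C) N) :=
      (hC.trans (dsum_assoc N N C)).trans (dsum_comm N (dsum Λ N C))
    have hW : Module.Finite Λ (dsum Λ N C) :=
      ((summand_left _ N).trans hiso.symm.summand).finite hX
    have hself := self_mem_cogen _ hW
    exact hN (hsmall _ _ hiso (cogen_iso hiso
      (cogen_dsum hself (cogen_summand (summand_left N C) hself))))
  · rintro Y hY hYX W ⟨Z, hiso, hZ, hW⟩ hYW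
    have hWX := (summand_left W Z).trans hiso.symm.summand
    have hZX := (summand_right W Z).trans hiso.symm.summand
    have hZW : Z ∈ Cogen Λ W := cogen_of_indec _ Z rfl (hZX.finite hX) fun V hV hVZ =>
      add_mem_cogen ((hVZ.trans hZX).finite hX) (hZ V hV hVZ) hYW
    have hZ0 := hsmall W Z hiso
      (cogen_iso hiso (cogen_dsum (self_mem_cogen W (hWX.finite hX)) hZW))
    exact hW Y hY (hYX.trans (hiso.trans (dsum_zero_iso hZ0)).summand)
      (summand_add (IsSummand.refl Y))
  · by_contra hcon
    obtain ⟨A, B, hAB, hB, hXA⟩ := proper_cogen K hX hcon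
    exact hB (hsmall A B hAB hXA)

end Generator

end Paper

open Paper in
/-- Proposition: `X ↦ [Cogen X, (τ⁻¹X)^⊥]` is a bijection from the
set of isomorphism classes of cogen-minimal basic `τ⁻¹`-rigid modules to the set
of functorially finite maximal join intervals in `torf (mod Λ)`, with inverse
`I ↦ I_s(I⁻)`.  The conjuncts state: well-definedness together with the fact that
`X` realizes `I_s` of the lower endpoint (so `ψ ∘ φ = id`); surjectivity together
with `φ ∘ ψ = id`; and injectivity up to isomorphism. -/
theorem stmt_3 (K Λ : Type) [Field K] [Ring Λ] [Algebra K Λ] [FiniteDimensional K Λ]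
    (hΛbasic : IsBasic Λ (ModuleCat.of Λ Λ)) :
    (∀ X : Mdl Λ, TauInvRigid Λ X → IsBasic Λ X → CogenMinimal Λ X →
      (IsMaxJoinIn Λ (modAll Λ) (Cogen Λ X) (perpTauInv Λ X)
          (zeroSubcat Λ) (modAll Λ) ∧
        FunctFin Λ (Cogen Λ X) ∧ FunctFin Λ (perpTauInv Λ X)) ∧
      IsMinSplitInj Λ (Cogen Λ X) X) ∧
    (∀ Jlo Jhi : Set (Mdl Λ),
      IsMaxJoinIn Λ (modAll Λ) Jlo Jhi (zeroSubcat Λ) (modAll Λ) →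
      FunctFin Λ Jlo → FunctFin Λ Jhi →
      ∃ X : Mdl Λ, TauInvRigid Λ X ∧ IsBasic Λ X ∧ CogenMinimal Λ X ∧
        Cogen Λ X = Jlo ∧ perpTauInv Λ X = Jhi ∧ IsMinSplitInj Λ Jlo X) ∧
    (∀ X X' : Mdl Λ, TauInvRigid Λ X → IsBasic Λ X → CogenMinimal Λ X →
      TauInvRigid Λ X' → IsBasic Λ X' → CogenMinimal Λ X' →
      Cogen Λ X = Cogen Λ X' → perpTauInv Λ X = perpTauInv Λ X' →
      IsoM Λ X X') := by
  have : IsArtinianRing Λ := IsArtinianRing.of_finite K Λ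
  refine ⟨fun X hX hb hm => ?_, fun Jlo Jhi hJ hlo hhi => ?_,
    fun X X' hX hb hm hX' hb' hm' hC _ => ?_⟩
  · obtain ⟨P⟩ := exists_copres K X hX.1
    have hsi := splitInj_of_minimal K hX.1 hb hm
    have hF := cogen_torf P hX
    have hG := perp_torf P
    exact ⟨⟨⟨hF, hG, fun M hM => torf_zero hF hM, cogen_subset_perp hX, hG.1, perp_eq_pop P hX hsi⟩,
      ⟨torf_contraFin hF, cogen_covFin K X hX.1⟩, ⟨torf_contraFin hG, perp_covFin K P hX⟩⟩,
      isMinSplitInj hb hsi⟩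
  · obtain ⟨hF, -, -, -, -, hpop⟩ := hJ
    obtain ⟨X, rfl, hb, hm, hsi⟩ := exists_min_generator K hF hlo.2
    have hX := rigid_of_splitInj hF hsi
    obtain ⟨P⟩ := exists_copres K X hX.1
    exact ⟨X, hX, hb, hm, rfl, (perp_eq_pop P hX hsi).trans hpop.symm, isMinSplitInj hb hsi⟩
  · have h := isMinSplitInj hb (splitInj_of_minimal K hX.1 hb hm)
    have h' := isMinSplitInj hb' (splitInj_of_minimal K hX'.1 hb' hm')
    rw [← hC] at h'
    exact iso_of_minSplitInj hX.1 hX'.1 h h'
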